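/- arXiv:2605.10173 — 11 statements merged into one kernel-verified Lean document; each statement's English description precedes it below -/
import Mathlib

section
/- Let X be a topological space and Q a nonempty compact subset of X. For every h ∈ ℒX the infimum inf_{x∈Q} h(x) is attained, and the map sending each h ∈ ℒX to min_{x∈Q} h(x) is a normalized superlinear prevision on X. -/
open scoped ENNReal NNReal

/-- A prevision on `X`: a Scott-continuous, positively homogeneous functional on the
lower semicontinuous maps `X → ℝ≥0∞` (represented as a functional on all maps,
constrained only on lower semicontinuous arguments). -/
def IsPrevision {X : Type*} [TopologicalSpace X] (F : (X → ℝ≥0∞) → ℝ≥0∞) : Prop :=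
  (∀ ⦃h h' : X → ℝ≥0∞⦄, LowerSemicontinuous h → LowerSemicontinuous h' →
      h ≤ h' → F h ≤ F h') ∧
  (∀ D : Set (X → ℝ≥0∞), D.Nonempty → (∀ h ∈ D, LowerSemicontinuous h) →
      DirectedOn (· ≤ ·) D → F (fun x => ⨆ h ∈ D, h x) = ⨆ h ∈ D, F h) ∧
  (∀ (a : ℝ≥0) (h : X → ℝ≥0∞), LowerSemicontinuous h →
      F (fun x => (a : ℝ≥0∞) * h x) = (a : ℝ≥0∞) * F h)

/-- Sublinearity of a prevision. -/
def PSublinear {X : Type*} [TopologicalSpace X] (F : (X → ℝ≥0∞) → ℝ≥0∞) : Prop :=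
  ∀ h h' : X → ℝ≥0∞, LowerSemicontinuous h → LowerSemicontinuous h' →
    F (fun x => h x + h' x) ≤ F h + F h'

/-- Superlinearity of a prevision. -/
def PSuperlinear {X : Type*} [TopologicalSpace X] (F : (X → ℝ≥0∞) → ℝ≥0∞) : Prop :=
  ∀ h h' : X → ℝ≥0∞, LowerSemicontinuous h → LowerSemicontinuous h' →
    F h + F h' ≤ F (fun x => h x + h' x)

/-- Linearity of a prevision. -/
def PLinear {X : Type*} [TopologicalSpace X] (F : (X → ℝ≥0∞) → ℝ≥0∞) : Prop :=
  ∀ h h' : X → ℝ≥0∞, LowerSemicontinuous h → LowerSemicontinuous h' →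
    F (fun x => h x + h' x) = F h + F h'

/-- Subnormalization: `F(𝟙 + h) ≤ 1 + F(h)`. -/
def PSubnormalized {X : Type*} [TopologicalSpace X] (F : (X → ℝ≥0∞) → ℝ≥0∞) : Prop :=
  ∀ h : X → ℝ≥0∞, LowerSemicontinuous h → F (fun x => 1 + h x) ≤ 1 + F h

/-- Normalization: `F(𝟙 + h) = 1 + F(h)`. -/
def PNormalized {X : Type*} [TopologicalSpace X] (F : (X → ℝ≥0∞) → ℝ≥0∞) : Prop :=
  ∀ h : X → ℝ≥0∞, LowerSemicontinuous h → F (fun x => 1 + h x) = 1 + F h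

/-- for a nonempty compact `Q ⊆ X`, the infimum of any lower semicontinuous
`h` on `Q` is attained, and `h ↦ min_{x ∈ Q} h x` is a normalized superlinear prevision. -/
theorem statement1 {X : Type*} [TopologicalSpace X] (Q : Set X)
    (hQ : IsCompact Q) (hne : Q.Nonempty) :
    (∀ h : X → ℝ≥0∞, LowerSemicontinuous h → ∃ x ∈ Q, h x = ⨅ y ∈ Q, h y) ∧
    IsPrevision (fun h : X → ℝ≥0∞ => ⨅ x ∈ Q, h x) ∧
    PSuperlinear (fun h : X → ℝ≥0∞ => ⨅ x ∈ Q, h x) ∧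
    PNormalized (fun h : X → ℝ≥0∞ => ⨅ x ∈ Q, h x) := by
  have att : ∀ h : X → ℝ≥0∞, LowerSemicontinuous h → ∃ x ∈ Q, h x = ⨅ y ∈ Q, h y := by
    intro h hh
    obtain ⟨x, hx, hm⟩ := LowerSemicontinuousOn.exists_isMinOn hne hQ (hh.lowerSemicontinuousOn Q)
    exact ⟨x, hx, le_antisymm (le_iInf₂ fun y hy => hm hy) (iInf₂_le x hx)⟩
  refine ⟨att, ⟨?_, ?_, ?_⟩, ?_, ?_⟩
  · intro h h' _ _ hle
    exact iInf₂_mono fun x _ => hle x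
  · intro D hD hl hdir
    apply le_antisymm
    · refine le_of_forall_lt fun r hr => ?_
      obtain ⟨s, hrs, hs⟩ := exists_between hr
      have : Nonempty D := hD.to_subtype
      obtain ⟨⟨k, hk⟩, hkQ⟩ := hQ.elim_directed_cover (fun h : D => {x | s < h.1 x})
        (fun h => (hl h.1 h.2).isOpen_preimage s)
        (fun x hx => by
          have h1 : s < ⨆ h ∈ D, h x := lt_of_lt_of_le hs (iInf₂_le x hx)
          obtain ⟨h, h2⟩ := lt_iSup_iff.1 h1
          obtain ⟨hD', h3⟩ := lt_iSup_iff.1 h2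
          exact Set.mem_iUnion.2 ⟨⟨h, hD'⟩, h3⟩)
        (fun a b => by
          obtain ⟨c, hc, hac, hbc⟩ := hdir a.1 a.2 b.1 b.2
          exact ⟨⟨c, hc⟩, fun x hx => lt_of_lt_of_le hx (hac x),
            fun x hx => lt_of_lt_of_le hx (hbc x)⟩)
      have h4 : s ≤ ⨅ x ∈ Q, k x := le_iInf₂ fun x hx => le_of_lt (hkQ hx)
      exact lt_of_lt_of_le hrs (h4.trans (le_iSup₂ (f := fun h (_ : h ∈ D) => ⨅ x ∈ Q, h x) k hk))
    · exact iSup₂_le fun h hh => iInf₂_mono fun x _ =>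
        le_iSup₂ (f := fun (h : X → ℝ≥0∞) (_ : h ∈ D) => h x) h hh
  · intro a h hh
    obtain ⟨x, hx, he⟩ := att h hh
    apply le_antisymm
    · refine (iInf₂_le x hx).trans ?_
      beta_reduce
      rw [he]
    · exact le_iInf₂ fun y hy => mul_le_mul_right (iInf₂_le y hy) _
  · intro h h' _ _
    exact le_iInf₂ fun y hy => add_le_add (iInf₂_le y hy) (iInf₂_le y hy)
  · intro h hh
    obtain ⟨x, hx, he⟩ := att h hh
    apply le_antisymm
    · refine (iInf₂_le x hx).trans ?_
      beta_reduce
      rw [he]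
    · exact le_iInf₂ fun y hy => add_le_add le_rfl (iInf₂_le y hy)
end

section
/- Let C be a cone, x₀ ∈ C, and A a convex subset of C. Then the cast shadow shadow(A, x₀) = ⋃_{β ∈ (0,1]} shd_{x₀,β}⁻¹(A) is convex. -/
open scoped NNReal

/-- in a cone (an additive commutative monoid with an action of the
semiring of nonnegative reals), the cast shadow
`shadow(A, x₀) = ⋃_{β ∈ (0,1]} (shd_{x₀,β})⁻¹(A)` of a convex set `A`, where
`shd_{x₀,β}(x) = β•x + (1−β)•x₀`, is convex. -/
theorem statement6 {C : Type*} [AddCommMonoid C] [Module ℝ≥0 C] (x₀ : C)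
    (A : Set C) (hA : Convex ℝ≥0 A) :
    Convex ℝ≥0 {x : C | ∃ β : ℝ≥0, 0 < β ∧ β ≤ 1 ∧ β • x + (1 - β) • x₀ ∈ A} := by
  rintro x ⟨β, hβ, hβ1, hx⟩ y ⟨γ, hγ, hγ1, hy⟩ a b ha hb hab
  have hD : 0 < a * γ + b * β := by
    rcases eq_or_lt_of_le ha with h | h
    · have hb1 : b = 1 := by rw [← h, zero_add] at hab; exact hab
      rw [← h, hb1]; simpa using hβ
    · exact add_pos_of_pos_of_nonneg (mul_pos h hγ) (zero_le)
  obtain ⟨D, hDe⟩ : ∃ D, D = a * γ + b * β := ⟨_, rfl⟩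
  rw [← hDe] at hD
  have hD0 : D ≠ 0 := hD.ne'
  obtain ⟨p, hp⟩ : ∃ p, p = 1 - β := ⟨_, rfl⟩
  obtain ⟨q, hq⟩ : ∃ q, q = 1 - γ := ⟨_, rfl⟩
  have hp1 : β + p = 1 := by rw [hp]; exact add_tsub_cancel_of_le hβ1
  have hq1 : γ + q = 1 := by rw [hq]; exact add_tsub_cancel_of_le hγ1
  have hst : a * γ / D + b * β / D = 1 := by
    rw [← add_div, ← hDe, div_self hD0]
  have key : β * γ / D + (a * γ / D * p + b * β / D * q) = 1 := by
    calc β * γ / D + (a * γ / D * p + b * β / D * q)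
        = (a + b) * (β * γ / D) + (a * γ / D * p + b * β / D * q) := by rw [hab, one_mul]
      _ = a * γ / D * (β + p) + b * β / D * (γ + q) := by ring
      _ = 1 := by rw [hp1, hq1, mul_one, mul_one, hst]
  have h := hA hx hy (zero_le : 0 ≤ a * γ / D) (zero_le : 0 ≤ b * β / D) hst
  refine ⟨β * γ / D, div_pos (mul_pos hβ hγ) hD, ?_, ?_⟩
  · rw [← key]; exact le_self_add
  · have e : 1 - β * γ / D = a * γ / D * p + b * β / D * q := by
      conv_lhs => rw [← key]
      exact add_tsub_cancel_left _ _
    rw [e]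
    rw [← hp, ← hq] at h
    convert h using 1
    module
end

section
/- Let C be a cone, x₀ ∈ C, and A a subset of C whose complement C ∖ A is convex. Then the complement of the cast shadow shadow(A, x₀) = ⋃_{β ∈ (0,1]} shd_{x₀,β}⁻¹(A) is convex. -/
open scoped NNReal

/-- in a cone (an additive commutative monoid with an action of the
semiring of nonnegative reals), if the complement of `A` is convex, then the
complement of the cast shadow `shadow(A, x₀) = ⋃_{β ∈ (0,1]} (shd_{x₀,β})⁻¹(A)`,
where `shd_{x₀,β}(x) = β•x + (1−β)•x₀`, is convex. -/
theorem statement7 {C : Type*} [AddCommMonoid C] [Module ℝ≥0 C] (x₀ : C)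
    (A : Set C) (hA : Convex ℝ≥0 Aᶜ) :
    Convex ℝ≥0 {x : C | ∃ β : ℝ≥0, 0 < β ∧ β ≤ 1 ∧ β • x + (1 - β) • x₀ ∈ A}ᶜ := by
  intro x hx y hy a b ha hb hab
  rintro ⟨β, h0, h1, hm⟩
  have hx' : β • x + (1 - β) • x₀ ∈ Aᶜ := fun h => hx ⟨β, h0, h1, h⟩
  have hy' : β • y + (1 - β) • x₀ ∈ Aᶜ := fun h => hy ⟨β, h0, h1, h⟩
  refine hA hx' hy' ha hb hab ?_
  have key : a • (β • x + (1 - β) • x₀) + b • (β • y + (1 - β) • x₀)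
      = β • (a • x + b • y) + (1 - β) • x₀ := by
    generalize 1 - β = γ
    calc a • (β • x + γ • x₀) + b • (β • y + γ • x₀)
        = β • (a • x + b • y) + ((a + b) * γ) • x₀ := by module
      _ = β • (a • x + b • y) + γ • x₀ := by rw [hab, one_mul]
  rw [key]
  exact hm
end

section
/- Let X be a topological space and P a prevision on X. Then P is subnormalized if and only if for every α ∈ (0,1] and every h ∈ ℒX, P(α·h + (1−α)·𝟙) > 1 implies P(h) > 1. -/
open scoped ENNReal NNReal

/-- a prevision `P` is subnormalized iff for every `α ∈ (0,1]` and every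
lower semicontinuous `h`, `P(α·h + (1−α)·𝟙) > 1` implies `P(h) > 1`. -/
theorem statement8 {X : Type*} [TopologicalSpace X] (P : (X → ℝ≥0∞) → ℝ≥0∞)
    (hP : IsPrevision P) :
    PSubnormalized P ↔
      ∀ α : ℝ≥0, 0 < α → α ≤ 1 → ∀ h : X → ℝ≥0∞, LowerSemicontinuous h →
        1 < P (fun x => (α : ℝ≥0∞) * h x + ((1 - α : ℝ≥0) : ℝ≥0∞)) → 1 < P h := by
  obtain ⟨-, -, hom⟩ := hP
  have lscmul : ∀ (a : ℝ≥0) (h : X → ℝ≥0∞), LowerSemicontinuous h →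
      LowerSemicontinuous (fun x => (a : ℝ≥0∞) * h x) := by
    intro a h hh
    exact (ENNReal.continuous_const_mul ENNReal.coe_ne_top).comp_lowerSemicontinuous hh
      (fun x y hxy => mul_le_mul_right hxy _)
  have lscadd : ∀ (h : X → ℝ≥0∞), LowerSemicontinuous h →
      LowerSemicontinuous (fun x => 1 + h x) := by
    intro h hh
    exact (continuous_const.add continuous_id).comp_lowerSemicontinuous hh
      (fun x y hxy => add_le_add_right hxy _)
  constructor
  · intro hs α h0 h1 h hh hlt
    rcases eq_or_lt_of_le h1 with rfl | h1
    · simpa using hlt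
    by_contra hc
    have hc := not_lt.1 hc
    obtain ⟨β, hβ⟩ : ∃ β : ℝ≥0, β = 1 - α := ⟨_, rfl⟩
    have hβ0 : β ≠ 0 := by rw [hβ]; exact (tsub_pos_of_lt h1).ne'
    have hsum : α + β = 1 := by rw [hβ]; exact add_tsub_cancel_of_le h1.le
    have hab : β * (α / β) = α := by field_simp
    have e : (fun x => (α : ℝ≥0∞) * h x + ((1 - α : ℝ≥0) : ℝ≥0∞)) =
        fun x => (β : ℝ≥0∞) * (1 + ((α / β : ℝ≥0) : ℝ≥0∞) * h x) := by
      funext x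
      rw [mul_add, ← mul_assoc, ← ENNReal.coe_mul, hab, ← hβ, mul_one, add_comm]
    rw [e, hom _ _ (lscadd _ (lscmul _ _ hh))] at hlt
    have h2 := hs _ (lscmul (α / β) _ hh)
    rw [hom _ _ hh] at h2
    refine absurd hlt (not_lt.2 ?_)
    calc (β : ℝ≥0∞) * P (fun x => 1 + ((α / β : ℝ≥0) : ℝ≥0∞) * h x)
        ≤ β * (1 + ((α / β : ℝ≥0) : ℝ≥0∞) * 1) := by
          gcongr
          exact h2.trans (by gcongr)
      _ = 1 := by
          rw [mul_one, mul_add, ← ENNReal.coe_mul, hab, mul_one, ← ENNReal.coe_add, add_comm, hsum]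
          rfl
  · intro H h hh
    by_contra hc
    obtain ⟨r, hr1, hr2⟩ := ENNReal.lt_iff_exists_nnreal_btwn.1 (not_le.1 hc)
    have hr : 1 < r := by
      have : (1 : ℝ≥0∞) < r := lt_of_le_of_lt le_self_add hr1
      exact_mod_cast this
    obtain ⟨t, ht⟩ : ∃ t : ℝ≥0, t = r - 1 := ⟨_, rfl⟩
    have ht0 : 0 < t := by rw [ht]; exact tsub_pos_of_lt hr
    obtain rfl : r = 1 + t := by rw [ht]; exact (add_tsub_cancel_of_le hr.le).symm
    have hPt : P h < t := by
      rw [ENNReal.coe_add] at hr1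
      exact lt_of_add_lt_add_left hr1
    have hsub : (1 - t / (1 + t) : ℝ≥0) = (1 + t)⁻¹ := by
      apply tsub_eq_of_eq_add
      field_simp
    have hm : t / (1 + t) * t⁻¹ = (1 + t)⁻¹ := by field_simp
    have hm1 : (1 + t)⁻¹ * (1 + t) = 1 := by field_simp
    have hm2 : t⁻¹ * t = 1 := by field_simp
    have hle : t / (1 + t) ≤ 1 := div_le_one_of_le₀ le_add_self zero_le
    have key := H (t / (1 + t)) (by positivity) hle _ (lscmul t⁻¹ _ hh)
    have e : (fun x => ((t / (1 + t) : ℝ≥0) : ℝ≥0∞) * (((t⁻¹ : ℝ≥0) : ℝ≥0∞) * h x) +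
        ((1 - t / (1 + t) : ℝ≥0) : ℝ≥0∞)) =
        fun x => (((1 + t)⁻¹ : ℝ≥0) : ℝ≥0∞) * (1 + h x) := by
      funext x
      rw [← mul_assoc, ← ENNReal.coe_mul, hm, hsub, mul_add, mul_one, add_comm]
    rw [e, hom _ _ (lscadd _ hh), hom _ _ hh] at key
    have k1 : (1 : ℝ≥0∞) < (((1 + t)⁻¹ : ℝ≥0) : ℝ≥0∞) * P (fun x => 1 + h x) := by
      calc (1 : ℝ≥0∞) = (((1 + t)⁻¹ : ℝ≥0) : ℝ≥0∞) * ((1 + t : ℝ≥0) : ℝ≥0∞) := by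
            rw [← ENNReal.coe_mul, hm1]; rfl
        _ < _ := ENNReal.mul_lt_mul_right (by simp) ENNReal.coe_ne_top hr2
    have k2 := key k1
    refine absurd k2 (not_lt.2 ?_)
    calc ((t⁻¹ : ℝ≥0) : ℝ≥0∞) * P h ≤ ((t⁻¹ : ℝ≥0) : ℝ≥0∞) * t := by gcongr
      _ = 1 := by rw [← ENNReal.coe_mul, hm2]; rfl
end

section
/- Let X be a topological space, P a subnormalized prevision on X, and F₀ a superlinear prevision on X with F₀ ≤ P pointwise. Then there exists a subnormalized superlinear prevision F on X with F₀ ≤ F ≤ P pointwise. -/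
open scoped ENNReal NNReal

theorem lsc_add_const_aux {X : Type*} [TopologicalSpace X] (a : ℝ≥0) {h : X → ℝ≥0∞}
    (hh : LowerSemicontinuous h) : LowerSemicontinuous (fun x => (a : ℝ≥0∞) + h x) :=
  lowerSemicontinuous_const.add hh

theorem lsc_mul_const_aux {X : Type*} [TopologicalSpace X] (a : ℝ≥0) {h : X → ℝ≥0∞}
    (hh : LowerSemicontinuous h) : LowerSemicontinuous (fun x => (a : ℝ≥0∞) * h x) :=
  (ENNReal.continuous_const_mul ENNReal.coe_ne_top).comp_lowerSemicontinuous hh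
    (fun _ _ hxy => mul_le_mul_right hxy _)

/-- given a subnormalized prevision `P` and a superlinear prevision
`F₀ ≤ P` (pointwise on lower semicontinuous maps), there is a subnormalized
superlinear prevision `F` with `F₀ ≤ F ≤ P`. -/
theorem statement9 {X : Type*} [TopologicalSpace X] (P F₀ : (X → ℝ≥0∞) → ℝ≥0∞)
    (hP : IsPrevision P) (hPsn : PSubnormalized P)
    (hF₀ : IsPrevision F₀) (hF₀sup : PSuperlinear F₀)
    (hle : ∀ h : X → ℝ≥0∞, LowerSemicontinuous h → F₀ h ≤ P h) :
    ∃ F : (X → ℝ≥0∞) → ℝ≥0∞, IsPrevision F ∧ PSuperlinear F ∧ PSubnormalized F ∧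
      (∀ h : X → ℝ≥0∞, LowerSemicontinuous h → F₀ h ≤ F h) ∧
      (∀ h : X → ℝ≥0∞, LowerSemicontinuous h → F h ≤ P h) := by
  obtain ⟨Pm, Ps, Ph⟩ := hP
  obtain ⟨Fm, Fs, Fh⟩ := hF₀
  have Pa : ∀ (a : ℝ≥0) (h : X → ℝ≥0∞), LowerSemicontinuous h →
      P (fun x => (a : ℝ≥0∞) + h x) ≤ a + P h := by
    intro a h hh
    rcases eq_or_ne a 0 with rfl | ha
    · simp
    · have hc : (a : ℝ≥0∞) * ((a⁻¹ : ℝ≥0) : ℝ≥0∞) = 1 := by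
        rw [← ENNReal.coe_mul, mul_inv_cancel₀ ha, ENNReal.coe_one]
      have hl := lsc_mul_const_aux a⁻¹ hh
      have h1 := hPsn _ hl
      rw [Ph _ _ hh] at h1
      have hl1 : LowerSemicontinuous (fun x => 1 + ((a⁻¹ : ℝ≥0) : ℝ≥0∞) * h x) := by
        simpa using lsc_add_const_aux 1 hl
      have h2 := Ph a _ hl1
      simp only [mul_add, ← mul_assoc, hc, one_mul, mul_one] at h2
      rw [h2]
      calc _ ≤ (a : ℝ≥0∞) * (1 + ((a⁻¹ : ℝ≥0) : ℝ≥0∞) * P h) := by gcongr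
        _ = _ := by rw [mul_add, ← mul_assoc, hc, one_mul, mul_one]
  have hFP : ∀ h : X → ℝ≥0∞, LowerSemicontinuous h →
      (⨆ a : ℝ≥0, (F₀ (fun x => (a : ℝ≥0∞) + h x) - a)) ≤ P h := by
    intro h hh
    refine iSup_le fun a => tsub_le_iff_left.2 ?_
    exact (hle _ (lsc_add_const_aux a hh)).trans (Pa a h hh)
  refine ⟨fun h => ⨆ a : ℝ≥0, (F₀ (fun x => (a : ℝ≥0∞) + h x) - a),
    ⟨?_, ?_, ?_⟩, ?_, ?_, ?_, hFP⟩
  · intro h h' hh hh' hl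
    refine iSup_mono fun a => tsub_le_tsub_right ?_ _
    exact Fm (lsc_add_const_aux a hh) (lsc_add_const_aux a hh') fun x => by
      have := hl x
      dsimp only
      gcongr
  · intro D hne hD hdir
    have key : ∀ a : ℝ≥0, F₀ (fun x => (a : ℝ≥0∞) + ⨆ h ∈ D, h x)
        = ⨆ h ∈ D, F₀ (fun x => (a : ℝ≥0∞) + h x) := by
      intro a
      have := Fs ((fun h x => (a : ℝ≥0∞) + h x) '' D) (hne.image _)
        (by rintro _ ⟨h, hh, rfl⟩; exact lsc_add_const_aux a (hD h hh))
        (by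
          rintro _ ⟨h, hh, rfl⟩ _ ⟨h', hh', rfl⟩
          obtain ⟨k, hk, h1, h2⟩ := hdir h hh h' hh'
          exact ⟨_, ⟨k, hk, rfl⟩, fun x => add_le_add_right (h1 x) _,
            fun x => add_le_add_right (h2 x) _⟩)
      simp only [iSup_image] at this
      rw [← this]
      congr 1
      funext x
      exact ENNReal.add_biSup hne _
    simp only [key, ENNReal.iSup_sub]
    rw [iSup_comm]
    refine iSup_congr fun h => ?_
    rw [iSup_comm]
  · intro c h hh
    rcases eq_or_ne c 0 with rfl | hc
    · have h0 := hFP (fun x => ((0 : ℝ≥0) : ℝ≥0∞) * h x) (lsc_mul_const_aux 0 hh)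
      rw [Ph 0 h hh] at h0
      simpa using h0
    · dsimp only
      rw [ENNReal.mul_iSup]
      rw [← (Equiv.mulLeft₀ c hc).iSup_comp]
      refine iSup_congr fun a => ?_
      rw [ENNReal.mul_sub (fun _ _ => ENNReal.coe_ne_top), ← Fh _ _ (lsc_add_const_aux a hh)]
      simp [mul_add]
  · intro h h' hh hh'
    refine ENNReal.iSup_add_iSup_le fun a b => ?_
    have hs := hh.add hh'
    rcases le_total (F₀ (fun x => (a : ℝ≥0∞) + h x)) a with h1 | h1
    · rw [tsub_eq_zero_of_le h1, zero_add]
      refine le_iSup_of_le b (tsub_le_tsub_right ?_ _)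
      exact Fm (lsc_add_const_aux b hh') (lsc_add_const_aux b hs)
        fun x => add_le_add_right le_add_self _
    rcases le_total (F₀ (fun x => (b : ℝ≥0∞) + h' x)) b with h2 | h2
    · rw [tsub_eq_zero_of_le h2, add_zero]
      refine le_iSup_of_le a (tsub_le_tsub_right ?_ _)
      exact Fm (lsc_add_const_aux a hh) (lsc_add_const_aux a hs)
        fun x => add_le_add_right le_self_add _
    rw [(ENNReal.cancel_of_ne ENNReal.coe_ne_top).tsub_add_tsub_comm
      (ENNReal.cancel_of_ne ENNReal.coe_ne_top) h1 h2]
    refine le_iSup_of_le (a + b) ?_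
    rw [ENNReal.coe_add]
    refine tsub_le_tsub_right ?_ _
    refine (hF₀sup _ _ (lsc_add_const_aux a hh) (lsc_add_const_aux b hh')).trans (le_of_eq ?_)
    congr 1
    funext x
    exact add_add_add_comm _ _ _ _
  · intro h hh
    refine iSup_le fun a => ?_
    have e : (fun x => (a : ℝ≥0∞) + (1 + h x)) = fun x => ((a + 1 : ℝ≥0) : ℝ≥0∞) + h x := by
      funext x; push_cast; ring
    rw [e, tsub_le_iff_left, ← add_assoc]
    refine le_trans ?_ (add_le_add_right
      (le_iSup (fun a : ℝ≥0 => F₀ (fun x => (a : ℝ≥0∞) + h x) - a) (a + 1)) _)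
    rw [ENNReal.coe_add, ENNReal.coe_one]
    exact le_add_tsub
  · intro h hh
    exact le_iSup_of_le 0 (by simp)
end

section
/- Let X be a topological space, P a normalized prevision on X, and F₀ a subnormalized sublinear prevision on X with P ≤ F₀ pointwise and F₀(𝟙) ≥ 1. Then there exists a normalized sublinear prevision F on X with P ≤ F ≤ F₀ pointwise. -/
open scoped ENNReal NNReal

section aux11
variable {X : Type*} [TopologicalSpace X]

def AuxSc (F : (X → ℝ≥0∞) → ℝ≥0∞) : Prop :=
  (∀ ⦃h h' : X → ℝ≥0∞⦄, LowerSemicontinuous h → LowerSemicontinuous h' →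
      h ≤ h' → F h ≤ F h') ∧
  (∀ D : Set (X → ℝ≥0∞), D.Nonempty → (∀ h ∈ D, LowerSemicontinuous h) →
      DirectedOn (· ≤ ·) D → F (fun x => ⨆ h ∈ D, h x) = ⨆ h ∈ D, F h)

def AuxHom (F : (X → ℝ≥0∞) → ℝ≥0∞) : Prop :=
  ∀ (a : ℝ≥0) (h : X → ℝ≥0∞), LowerSemicontinuous h →
      F (fun x => (a : ℝ≥0∞) * h x) = (a : ℝ≥0∞) * F h

def AuxLe (F G : (X → ℝ≥0∞) → ℝ≥0∞) : Prop :=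
  ∀ h : X → ℝ≥0∞, LowerSemicontinuous h → F h ≤ G h

noncomputable def auxCore (G : (X → ℝ≥0∞) → ℝ≥0∞) : (X → ℝ≥0∞) → ℝ≥0∞ :=
  fun h => ⨆ φ ∈ {φ : (X → ℝ≥0∞) → ℝ≥0∞ | AuxSc φ ∧ AuxLe φ G}, φ h

lemma aux_core_sc (G : (X → ℝ≥0∞) → ℝ≥0∞) : AuxSc (auxCore G) := by
  constructor
  · intro h h' hh hh' hle
    exact iSup₂_mono fun φ hφ => hφ.1.1 hh hh' hle
  · intro D hD hl hd
    unfold auxCore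
    rw [iSup₂_comm]
    exact iSup_congr fun φ => iSup_congr fun hφ => hφ.1.2 D hD hl hd

lemma aux_core_le (G : (X → ℝ≥0∞) → ℝ≥0∞) : AuxLe (auxCore G) G := by
  intro h hh
  exact iSup₂_le fun φ hφ => hφ.2 h hh

lemma aux_le_core {φ G : (X → ℝ≥0∞) → ℝ≥0∞} (h1 : AuxSc φ) (h2 : AuxLe φ G) (h : X → ℝ≥0∞) :
    φ h ≤ auxCore G h :=
  le_iSup₂_of_le (f := fun φ (_ : φ ∈ {φ : (X → ℝ≥0∞) → ℝ≥0∞ | AuxSc φ ∧ AuxLe φ G}) => φ h)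
    φ ⟨h1, h2⟩ le_rfl

lemma aux_sc_comp {φ : (X → ℝ≥0∞) → ℝ≥0∞} (hφ : AuxSc φ) (T : (X → ℝ≥0∞) → (X → ℝ≥0∞))
    (h1 : ∀ h, LowerSemicontinuous h → LowerSemicontinuous (T h)) (h2 : Monotone T)
    (h3 : ∀ D : Set (X → ℝ≥0∞), D.Nonempty →
      T (fun x => ⨆ h ∈ D, h x) = fun x => ⨆ h ∈ D, T h x) :
    AuxSc (fun h => φ (T h)) := by
  constructor
  · intro h h' hh hh' hle
    exact hφ.1 (h1 _ hh) (h1 _ hh') (h2 hle)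
  · intro D hD hl hd
    have := hφ.2 (T '' D) (hD.image _) (by rintro _ ⟨h, hh, rfl⟩; exact h1 _ (hl _ hh))
      (by
        rintro _ ⟨h, hh, rfl⟩ _ ⟨h', hh', rfl⟩
        obtain ⟨k, hk, hk1, hk2⟩ := hd h hh h' hh'
        exact ⟨T k, ⟨k, hk, rfl⟩, h2 hk1, h2 hk2⟩)
    simp only [iSup_image] at this
    simp only [h3 D hD]
    exact this

lemma aux_lsc_mul (a : ℝ≥0) {h : X → ℝ≥0∞} (hh : LowerSemicontinuous h) :
    LowerSemicontinuous (fun x => (a : ℝ≥0∞) * h x) :=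
  (ENNReal.continuous_const_mul ENNReal.coe_ne_top).comp_lowerSemicontinuous hh
    (fun _ _ hxy => mul_le_mul_right hxy _)

lemma aux_lsc_cadd (a : ℝ≥0∞) {h : X → ℝ≥0∞} (hh : LowerSemicontinuous h) :
    LowerSemicontinuous (fun x => a + h x) :=
  lowerSemicontinuous_const.add hh

lemma aux_sc_mul {φ : (X → ℝ≥0∞) → ℝ≥0∞} (hφ : AuxSc φ) (a b : ℝ≥0) :
    AuxSc (fun h => (b : ℝ≥0∞) * φ (fun x => (a : ℝ≥0∞) * h x)) := by
  have := aux_sc_comp hφ (fun h x => (a : ℝ≥0∞) * h x) (fun h hh => aux_lsc_mul a hh)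
    (fun h h' hle x => by dsimp only; gcongr; exact hle x)
    (fun D hD => by simp only [ENNReal.mul_iSup])
  constructor
  · intro h h' hh hh' hle
    exact mul_le_mul_right (this.1 hh hh' hle) _
  · intro D hD hl hd
    have := this.2 D hD hl hd
    dsimp only at this ⊢
    rw [this]
    simp only [ENNReal.mul_iSup]

lemma aux_sc_sub {φ : (X → ℝ≥0∞) → ℝ≥0∞} (hφ : AuxSc φ) {k : X → ℝ≥0∞}
    (hk : LowerSemicontinuous k) (c : ℝ≥0∞) :
    AuxSc (fun h => φ (fun x => h x + k x) - c) := by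
  have := aux_sc_comp hφ (fun h x => h x + k x) (fun h hh => hh.add hk)
    (fun h h' hle x => by dsimp only; gcongr; exact hle x)
    (fun D hD => by funext x; dsimp only; rw [ENNReal.biSup_add hD])
  constructor
  · intro h h' hh hh' hle
    exact tsub_le_tsub_right (this.1 hh hh' hle) _
  · intro D hD hl hd
    have := this.2 D hD hl hd
    dsimp only at this ⊢
    rw [this]
    simp only [ENNReal.iSup_sub]

lemma aux_core_sub {G : (X → ℝ≥0∞) → ℝ≥0∞} (hG : PSublinear G) : PSublinear (auxCore G) := by
  have h1 : ∀ h h' : X → ℝ≥0∞, LowerSemicontinuous h → LowerSemicontinuous h' →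
      auxCore G (fun x => h x + h' x) ≤ auxCore G h + G h' := by
    intro h h' hh hh'
    rw [← tsub_le_iff_right]
    refine aux_le_core (aux_sc_sub (aux_core_sc G) hh' (G h')) ?_ h
    intro k hk
    rw [tsub_le_iff_right]
    exact (aux_core_le G _ (hk.add hh')).trans (hG _ _ hk hh')
  intro h h' hh hh'
  have h2 : auxCore G (fun x => h' x + h x) - auxCore G h ≤ auxCore G h' := by
    refine aux_le_core (aux_sc_sub (aux_core_sc G) hh (auxCore G h)) ?_ h'
    intro k hk
    rw [tsub_le_iff_left]
    simpa only [add_comm] using h1 h k hh hk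
  rw [tsub_le_iff_left] at h2
  simpa only [add_comm] using h2

lemma aux_hom_of_le {G : (X → ℝ≥0∞) → ℝ≥0∞}
    (h0 : G (fun _ => 0) = 0)
    (hG : ∀ (a : ℝ≥0), a ≠ 0 → ∀ h : X → ℝ≥0∞, LowerSemicontinuous h →
      G (fun x => (a : ℝ≥0∞) * h x) ≤ (a : ℝ≥0∞) * G h) : AuxHom G := by
  intro a h hh
  by_cases ha : a = 0
  · subst ha; simp [h0]
  have ha' : (a : ℝ≥0∞) ≠ 0 := by simpa using ha
  refine le_antisymm (hG a ha h hh) ?_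
  have := hG a⁻¹ (inv_ne_zero ha) _ (aux_lsc_mul a hh)
  rw [ENNReal.coe_inv ha] at this
  simp only [← mul_assoc, ENNReal.inv_mul_cancel ha' ENNReal.coe_ne_top, one_mul] at this
  calc (a : ℝ≥0∞) * G h ≤ a * ((a : ℝ≥0∞)⁻¹ * G (fun x => (a : ℝ≥0∞) * h x)) := by gcongr
    _ = _ := by rw [← mul_assoc, ENNReal.mul_inv_cancel ha' ENNReal.coe_ne_top, one_mul]

lemma aux_hom_zero {G : (X → ℝ≥0∞) → ℝ≥0∞} (hG : AuxHom G) : G (fun _ => 0) = 0 := by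
  have := hG 0 (fun _ => 0) lowerSemicontinuous_const
  simpa using this

lemma aux_core_hom {G : (X → ℝ≥0∞) → ℝ≥0∞} (hG : AuxHom G) : AuxHom (auxCore G) := by
  apply aux_hom_of_le
  · have := aux_core_le G (fun _ => 0) lowerSemicontinuous_const
    rw [aux_hom_zero hG] at this
    simpa using this
  intro a ha h hh
  have ha' : (a : ℝ≥0∞) ≠ 0 := by simpa using ha
  have := aux_le_core (G := G) (aux_sc_mul (aux_core_sc G) a a⁻¹) (by
    intro k hk
    dsimp only
    calc _ ≤ ((a⁻¹ : ℝ≥0) : ℝ≥0∞) * G (fun x => (a : ℝ≥0∞) * k x) := by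
            gcongr; exact aux_core_le G _ (aux_lsc_mul a hk)
      _ = G k := by
        rw [hG a k hk, ENNReal.coe_inv ha, ← mul_assoc,
          ENNReal.inv_mul_cancel ha' ENNReal.coe_ne_top, one_mul]) h
  calc auxCore G (fun x => (a : ℝ≥0∞) * h x)
      = a * (((a⁻¹ : ℝ≥0) : ℝ≥0∞) * auxCore G (fun x => (a : ℝ≥0∞) * h x)) := by
        rw [ENNReal.coe_inv ha, ← mul_assoc,
          ENNReal.mul_inv_cancel ha' ENNReal.coe_ne_top, one_mul]
    _ ≤ _ := by gcongr

noncomputable def auxTr (F : (X → ℝ≥0∞) → ℝ≥0∞) : (X → ℝ≥0∞) → ℝ≥0∞ :=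
  fun h => ⨅ a : ℝ≥0, (F (fun x => (a : ℝ≥0∞) + h x) - a)

lemma auxTr_le (F : (X → ℝ≥0∞) → ℝ≥0∞) (h : X → ℝ≥0∞) : auxTr F h ≤ F h :=
  (iInf_le _ 0).trans (by simp)

lemma auxTr_sub {F : (X → ℝ≥0∞) → ℝ≥0∞} (hF : PSublinear F) : PSublinear (auxTr F) := by
  intro h h' hh hh'
  unfold auxTr
  simp only [ENNReal.iInf_add, ENNReal.add_iInf]
  refine le_iInf fun b => le_iInf fun a => (iInf_le _ (a + b)).trans ?_
  have := hF _ _ (aux_lsc_cadd (a : ℝ≥0∞) hh) (aux_lsc_cadd (b : ℝ≥0∞) hh')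
  simp only [add_add_add_comm _ (h _)] at this
  rw [ENNReal.coe_add]
  exact (tsub_le_tsub_right this _).trans add_tsub_add_le_tsub_add_tsub

lemma auxTr_hom {F : (X → ℝ≥0∞) → ℝ≥0∞} (hF : AuxHom F) : AuxHom (auxTr F) := by
  apply aux_hom_of_le
  · have := auxTr_le F (fun _ => 0)
    rw [aux_hom_zero hF] at this
    simpa using this
  intro a ha h hh
  have ha' : (a : ℝ≥0∞) ≠ 0 := by simpa using ha
  unfold auxTr
  rw [ENNReal.mul_iInf_of_ne ha' ENNReal.coe_ne_top]
  refine le_iInf fun b => (iInf_le _ (a * b)).trans (le_of_eq ?_)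
  rw [ENNReal.mul_sub (fun _ _ => ENNReal.coe_ne_top), ← hF a _ (aux_lsc_cadd _ hh)]
  simp only [mul_add, ENNReal.coe_mul]

lemma aux_norm {P : (X → ℝ≥0∞) → ℝ≥0∞} (hP : AuxHom P) (hn : PNormalized P) (a : ℝ≥0)
    {h : X → ℝ≥0∞} (hh : LowerSemicontinuous h) :
    P (fun x => (a : ℝ≥0∞) + h x) = a + P h := by
  by_cases ha : a = 0
  · subst ha; simp
  have ha' : (a : ℝ≥0∞) ≠ 0 := by simpa using ha
  have h1 := hn _ (aux_lsc_mul a⁻¹ hh)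
  have h2 := hP a _ (aux_lsc_cadd 1 (aux_lsc_mul a⁻¹ hh))
  rw [h1, hP a⁻¹ h hh] at h2
  rw [ENNReal.coe_inv ha] at h2
  simpa only [mul_add, ← mul_assoc, ENNReal.mul_inv_cancel ha' ENNReal.coe_ne_top, one_mul,
    mul_one] using h2

def AuxGood (P F₀ F : (X → ℝ≥0∞) → ℝ≥0∞) : Prop :=
  AuxHom F ∧ PSublinear F ∧ AuxLe P F ∧ AuxLe F F₀

lemma aux_core_good {P F₀ G : (X → ℝ≥0∞) → ℝ≥0∞} (hP : AuxSc P) (hG : AuxGood P F₀ G) :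
    AuxGood P F₀ (auxCore G) :=
  ⟨aux_core_hom hG.1, aux_core_sub hG.2.1, fun h _ => aux_le_core hP hG.2.2.1 h,
    fun h hh => (aux_core_le G h hh).trans (hG.2.2.2 h hh)⟩

lemma aux_inf_good {P F₀ : (X → ℝ≥0∞) → ℝ≥0∞} {ι : Type*} [Nonempty ι]
    (f : ι → (X → ℝ≥0∞) → ℝ≥0∞) (hf : ∀ i, AuxGood P F₀ (f i))
    (hd : ∀ i j, ∃ k, AuxLe (f k) (f i) ∧ AuxLe (f k) (f j)) :
    AuxGood P F₀ (fun h => ⨅ i, f i h) := by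
  refine ⟨?_, ?_, ?_, ?_⟩
  · apply aux_hom_of_le
    · simp [fun i => aux_hom_zero (hf i).1]
    · intro a ha h hh
      have ha' : (a : ℝ≥0∞) ≠ 0 := by simpa using ha
      rw [ENNReal.mul_iInf_of_ne ha' ENNReal.coe_ne_top]
      exact iInf_mono fun i => ((hf i).1 a h hh).le
  · intro h h' hh hh'
    dsimp only
    rw [ENNReal.iInf_add_iInf]
    · exact iInf_mono fun i => (hf i).2.1 h h' hh hh'
    · intro i j
      obtain ⟨k, h1, h2⟩ := hd i j
      exact ⟨k, add_le_add (h1 _ hh) (h2 _ hh')⟩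
  · intro h hh
    exact le_iInf fun i => (hf i).2.2.1 h hh
  · intro h hh
    exact (iInf_le _ (Classical.arbitrary ι)).trans ((hf _).2.2.2 h hh)

lemma aux_exists_min {P F₀ : (X → ℝ≥0∞) → ℝ≥0∞} (hP : AuxSc P) (hF₀ : AuxSc F₀)
    (hg : AuxGood P F₀ F₀) :
    ∃ F, AuxSc F ∧ AuxGood P F₀ F ∧ ∀ G, AuxSc G → AuxGood P F₀ G → AuxLe G F → AuxLe F G := by
  let S := {F : (X → ℝ≥0∞) → ℝ≥0∞ // AuxSc F ∧ AuxGood P F₀ F}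
  obtain ⟨m, hm⟩ := exists_maximal_of_chains_bounded (α := S)
    (r := fun a b => AuxLe b.1 a.1) (by
      intro c hc
      rcases c.eq_empty_or_nonempty with rfl | hne
      · exact ⟨⟨F₀, hF₀, hg⟩, by simp⟩
      have : Nonempty c := hne.to_subtype
      have hgood := aux_inf_good (P := P) (F₀ := F₀) (fun i : c => i.1.1) (fun i => i.1.2.2) (by
        intro i j
        by_cases hij : i.1 = j.1
        · exact ⟨i, fun _ _ => le_rfl, by rw [hij]; exact fun _ _ => le_rfl⟩
        rcases hc i.2 j.2 hij with h | h
        · exact ⟨j, h, fun _ _ => le_rfl⟩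
        · exact ⟨i, fun _ _ => le_rfl, h⟩)
      refine ⟨⟨_, aux_core_sc _, aux_core_good hP hgood⟩, fun a ha h hh => ?_⟩
      exact (aux_core_le _ h hh).trans (iInf_le (fun i : c => i.1.1 h) ⟨a, ha⟩))
    (fun h1 h2 h hh => (h2 h hh).trans (h1 h hh))
  exact ⟨m.1, m.2.1, m.2.2, fun G h1 h2 h3 => hm ⟨G, h1, h2⟩ h3⟩

end aux11

/-- given a normalized prevision `P` and a subnormalized sublinear
prevision `F₀ ≥ P` (pointwise on lower semicontinuous maps) with `F₀(𝟙) ≥ 1`, there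
is a normalized sublinear prevision `F` with `P ≤ F ≤ F₀`. -/
theorem statement11 {X : Type*} [TopologicalSpace X] (P F₀ : (X → ℝ≥0∞) → ℝ≥0∞)
    (hP : IsPrevision P) (hPn : PNormalized P)
    (hF₀ : IsPrevision F₀) (hF₀sub : PSublinear F₀) (hF₀sn : PSubnormalized F₀)
    (hle : ∀ h : X → ℝ≥0∞, LowerSemicontinuous h → P h ≤ F₀ h)
    (hone : 1 ≤ F₀ (fun _ => 1)) :
    ∃ F : (X → ℝ≥0∞) → ℝ≥0∞, IsPrevision F ∧ PSublinear F ∧ PNormalized F ∧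
      (∀ h : X → ℝ≥0∞, LowerSemicontinuous h → P h ≤ F h) ∧
      (∀ h : X → ℝ≥0∞, LowerSemicontinuous h → F h ≤ F₀ h) := by
  have hs : AuxSc P := ⟨hP.1, hP.2.1⟩
  obtain ⟨F, hF, hFg, hmin⟩ := aux_exists_min (P := P) (F₀ := F₀) hs ⟨hF₀.1, hF₀.2.1⟩
    ⟨hF₀.2.2, hF₀sub, hle, fun _ _ => le_rfl⟩
  have hPT : AuxLe P (auxTr F) := by
    intro h hh
    refine le_iInf fun a => ?_
    refine ENNReal.le_sub_of_add_le_left ENNReal.coe_ne_top ?_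
    rw [← aux_norm hP.2.2 hPn a hh]
    exact hFg.2.2.1 _ (aux_lsc_cadd _ hh)
  have hTg : AuxGood P F₀ (auxTr F) := ⟨auxTr_hom hFg.1, auxTr_sub hFg.2.1, hPT,
    fun h hh => (auxTr_le F h).trans (hFg.2.2.2 h hh)⟩
  have hFT := hmin _ (aux_core_sc _) (aux_core_good hs hTg)
    (fun h hh => (aux_core_le _ h hh).trans (auxTr_le F h))
  refine ⟨F, ⟨hF.1, hF.2, hFg.1⟩, hFg.2.1, ?_, hFg.2.2.1, hFg.2.2.2⟩
  intro h hh
  apply le_antisymm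
  · refine (hFg.2.1 (fun _ => 1) h lowerSemicontinuous_const hh).trans ?_
    gcongr
    refine (hFg.2.2.2 _ lowerSemicontinuous_const).trans ?_
    have := hF₀sn (fun _ => 0) lowerSemicontinuous_const
    simpa [aux_hom_zero hF₀.2.2] using this
  · have h1 : F h ≤ F (fun x => 1 + h x) - 1 := by
      refine ((hFT h hh).trans (aux_core_le _ h hh)).trans ((iInf_le _ 1).trans ?_)
      simp
    have h2 : 1 ≤ F (fun x => 1 + h x) := by
      refine le_trans ?_ (hFg.2.2.1 _ (aux_lsc_cadd 1 hh))
      rw [hPn h hh]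
      exact le_self_add
    calc 1 + F h ≤ 1 + (F (fun x => 1 + h x) - 1) := by gcongr
      _ = _ := add_tsub_cancel_of_le h2
end

section
/- Let X be a topological space and (Q_i)_{i∈I} any family of compact saturated subsets of X. Then the set {C ⊆ X : C closed and C ∩ Q_i ≠ ∅ for every i ∈ I} is compact and upward-closed with respect to inclusion in the space of all closed subsets of X equipped with the lower Vietoris topology. -/
open TopologicalSpace

/-- A subset is saturated iff it is upward-closed for the specialization preordering
(`x ≤ y` iff every open set containing `x` contains `y`). -/
def Saturated {X : Type*} [TopologicalSpace X] (Q : Set X) : Prop :=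
  ∀ x ∈ Q, ∀ y : X, (∀ U : Set X, IsOpen U → x ∈ U → y ∈ U) → y ∈ Q

/-- The lower Vietoris topology on the space of closed subsets of `X`, generated by the
subbasic open sets `◇U = {C closed | C ∩ U ≠ ∅}` for `U` open. -/
def lowerVietoris (X : Type*) [TopologicalSpace X] : TopologicalSpace (Closeds X) :=
  TopologicalSpace.generateFrom
    {S | ∃ U : Set X, IsOpen U ∧ S = {C : Closeds X | ((C : Set X) ∩ U).Nonempty}}

/-- for any family `(Q i)` of compact saturated subsets of `X`, the set of
closed sets meeting every `Q i` is compact and upward-closed (for inclusion) in the space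
of closed subsets of `X` with the lower Vietoris topology. -/
theorem statement12 {X : Type*} [TopologicalSpace X] {ι : Type*} (Q : ι → Set X)
    (hc : ∀ i, IsCompact (Q i)) (hs : ∀ i, Saturated (Q i)) :
    @IsCompact (Closeds X) (lowerVietoris X)
      {C : Closeds X | ∀ i, ((C : Set X) ∩ Q i).Nonempty} ∧
    (∀ C C' : Closeds X, (∀ i, ((C : Set X) ∩ Q i).Nonempty) → C ≤ C' →
      ∀ i, ((C' : Set X) ∩ Q i).Nonempty) := by
  refine ⟨?_, fun C C' h hCC i => (h i).mono (Set.inter_subset_inter_left _ hCC)⟩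
  letI := lowerVietoris X
  rw [isCompact_iff_ultrafilter_le_nhds]
  intro F hF
  rw [Filter.le_principal_iff] at hF
  let D : Set X → Set (Closeds X) := fun U => {C : Closeds X | ((C : Set X) ∩ U).Nonempty}
  have hcl : IsClosed {x : X | ∀ U : Set X, IsOpen U → x ∈ U → D U ∈ F} := by
    rw [← isOpen_compl_iff, isOpen_iff_forall_mem_open]
    intro x hx
    simp only [Set.mem_compl_iff, Set.mem_setOf_eq, not_forall] at hx
    obtain ⟨U, hU, hxU, hn⟩ := hx
    exact ⟨U, fun y hy h => hn (h U hU hy), hU, hxU⟩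
  refine ⟨⟨_, hcl⟩, ?_, ?_⟩
  · intro i
    by_contra hne
    have key : ∃ U : Set X, IsOpen U ∧ Q i ⊆ U ∧ D U ∉ F := by
      refine (hc i).induction_on (p := fun s => ∃ U : Set X, IsOpen U ∧ s ⊆ U ∧ D U ∉ F) ?_ ?_ ?_ ?_
      · refine ⟨∅, isOpen_empty, subset_rfl, ?_⟩
        have : D ∅ = ∅ := by simp [D]
        rw [this]
        exact F.empty_notMem
      · rintro s t hst ⟨U, hU, h1, h2⟩
        exact ⟨U, hU, hst.trans h1, h2⟩
      · rintro s t ⟨U, hU, h1, h2⟩ ⟨V, hV, h3, h4⟩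
        refine ⟨U ∪ V, hU.union hV, Set.union_subset_union h1 h3, ?_⟩
        have : D (U ∪ V) = D U ∪ D V := by
          ext C
          simp [D, Set.inter_union_distrib_left, Set.union_nonempty]
        rw [this, Ultrafilter.union_mem_iff]
        tauto
      · intro x hx
        by_contra hcon
        refine hne ⟨x, ?_, hx⟩
        intro U hU hxU
        by_contra hn
        exact hcon ⟨U, mem_nhdsWithin_of_mem_nhds (hU.mem_nhds hxU), U, hU, subset_rfl, hn⟩
    obtain ⟨U, hU, hQ, hn⟩ := key
    exact hn (Filter.mem_of_superset hF fun C hC => (hC i).mono (Set.inter_subset_inter_right _ hQ))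
  · refine le_of_le_of_eq ?_ (nhds_generateFrom (g := {S | ∃ U : Set X, IsOpen U ∧ S = {C : Closeds X | ((C : Set X) ∩ U).Nonempty}})).symm
    refine le_iInf₂ ?_
    rintro S ⟨hS, U, hU, rfl⟩
    rw [Filter.le_principal_iff]
    obtain ⟨x, hx, hxU⟩ := hS
    exact hx U hU hxU
end

section
/- Let X be a topological space. (a) For every set B of closed subsets of X, the set {Q ⊆ X : Q compact saturated and Q ∩ C ≠ ∅ for every C ∈ B} is closed in the space of compact saturated subsets of X with the upper Vietoris topology. (b) For every set A of compact saturated subsets of X, the set {C ⊆ X : C closed and C ∩ Q ≠ ∅ for every Q ∈ A} is compact and upward-closed with respect to inclusion in the space of closed subsets of X with the lower Vietoris topology. -/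
open TopologicalSpace

/-- The space of compact saturated subsets of `X`. -/
def KSat (X : Type*) [TopologicalSpace X] : Type _ :=
  {Q : Set X // IsCompact Q ∧ Saturated Q}

/-- The upper Vietoris topology on the space of compact saturated subsets of `X`,
generated by the basic open sets `☐U = {Q compact saturated | Q ⊆ U}` for `U` open. -/
def upperVietoris (X : Type*) [TopologicalSpace X] : TopologicalSpace (KSat X) :=
  TopologicalSpace.generateFrom
    {S | ∃ U : Set X, IsOpen U ∧ S = {Q : KSat X | Q.1 ⊆ U}}

/-- (a) for every set `B` of closed subsets of `X`, the compact saturated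
sets meeting every member of `B` form a closed subset of the upper Vietoris space;
(b) for every set `A` of compact saturated subsets of `X`, the closed sets meeting every
member of `A` form a compact, inclusion-upward-closed subset of the lower Vietoris
space. -/
theorem statement13 {X : Type*} [TopologicalSpace X] :
    (∀ B : Set (Set X), (∀ C ∈ B, IsClosed C) →
      @IsClosed (KSat X) (upperVietoris X) {Q : KSat X | ∀ C ∈ B, (Q.1 ∩ C).Nonempty}) ∧
    (∀ A : Set (Set X), (∀ Q ∈ A, IsCompact Q ∧ Saturated Q) →
      @IsCompact (Closeds X) (lowerVietoris X)
        {C : Closeds X | ∀ Q ∈ A, ((C : Set X) ∩ Q).Nonempty} ∧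
      ∀ C C' : Closeds X, (∀ Q ∈ A, ((C : Set X) ∩ Q).Nonempty) → C ≤ C' →
        ∀ Q ∈ A, ((C' : Set X) ∩ Q).Nonempty) := by
  refine ⟨fun B hB => ?_, fun A hA => ⟨?_, ?_⟩⟩
  · letI := upperVietoris X
    have h : {Q : KSat X | ∀ C ∈ B, (Q.1 ∩ C).Nonempty}
        = ⋂ C ∈ B, {Q : KSat X | Q.1 ⊆ Cᶜ}ᶜ := by
      ext Q
      simp only [Set.mem_setOf_eq, Set.mem_iInter, Set.mem_compl_iff,
        Set.subset_compl_iff_disjoint_right, Set.not_disjoint_iff_nonempty_inter]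
    rw [h]
    refine isClosed_biInter fun C hC => ?_
    refine IsOpen.isClosed_compl ?_
    exact TopologicalSpace.isOpen_generateFrom_of_mem ⟨Cᶜ, (hB C hC).isOpen_compl, rfl⟩
  · letI := lowerVietoris X
    refine isCompact_generateFrom rfl fun P hP hcov => ?_
    let D : Set X → Set (Closeds X) := fun U => {C : Closeds X | ((C : Set X) ∩ U).Nonempty}
    let V : Set (Set X) := {U | IsOpen U ∧ D U ∈ P}
    have hVo : IsOpen (⋃₀ V) := isOpen_sUnion fun U hU => hU.1
    have hC0 : ∃ Q ∈ A, Q ⊆ ⋃₀ V := by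
      by_contra hne
      push Not at hne
      let C0 : Closeds X := ⟨(⋃₀ V)ᶜ, hVo.isClosed_compl⟩
      have hmem : C0 ∈ {C : Closeds X | ∀ Q ∈ A, ((C : Set X) ∩ Q).Nonempty} := by
        intro Q hQ
        obtain ⟨x, hx, hx'⟩ := Set.not_subset.1 (hne Q hQ)
        exact ⟨x, hx', hx⟩
      obtain ⟨S, hS, hCS⟩ := hcov hmem
      obtain ⟨U, hU, rfl⟩ := hP hS
      obtain ⟨x, hx, hxU⟩ := hCS
      exact hx ⟨U, ⟨hU, hS⟩, hxU⟩
    obtain ⟨Q, hQ, hQV⟩ := hC0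
    obtain ⟨T, hTV, hT, hQT⟩ := (hA Q hQ).1.elim_finite_subcover_image (b := V) (c := id)
      (fun U hU => hU.1) (by simpa [Set.sUnion_eq_biUnion] using hQV)
    refine ⟨D '' T, ?_, hT.image D, ?_⟩
    · rintro _ ⟨U, hU, rfl⟩
      exact (hTV hU).2
    · intro C hC
      obtain ⟨x, hxC, hxQ⟩ := hC Q hQ
      obtain ⟨U, hU, hxU⟩ := Set.mem_iUnion₂.1 (hQT hxQ)
      exact ⟨D U, ⟨U, hU, rfl⟩, x, hxC, hxU⟩
  · intro C C' h hle Q hQ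
    obtain ⟨x, hx, hxQ⟩ := h Q hQ
    exact ⟨x, hle hx, hxQ⟩
end

section
/- Let X be a topological space, F⁻ a superlinear prevision on X, and F⁺ a sublinear prevision on X. There exists a linear prevision Λ on X with F⁻ ≤ Λ ≤ F⁺ pointwise if and only if F⁻ ≤ F⁺ pointwise. Moreover, when F⁻ ≤ F⁺: if F⁺ is subnormalized then Λ can be chosen subnormalized, and if F⁻ and F⁺ are both normalized then Λ can be chosen normalized. -/
open scoped ENNReal NNReal

namespace Sandwich

structure Adm {C : Type*} [AddCommMonoid C] [PartialOrder C] [Module ℝ≥0 C]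
    (q p : C → ℝ≥0∞) : Prop where
  mono : ∀ x y, x ≤ y → p x ≤ p y
  hom : ∀ (a : ℝ≥0) x, p (a • x) ≤ a * p x
  sub : ∀ x y, p (x + y) ≤ p x + p y
  ge : ∀ x, q x ≤ p x

theorem add_le_of_nn {a b c : ℝ≥0∞} (h : ∀ r : ℝ≥0, (r : ℝ≥0∞) ≤ b → a + r ≤ c) :
    a + b ≤ c := by
  induction b with
  | top =>
    rw [add_top]
    exact ENNReal.le_of_forall_nnreal_lt fun r _ => le_add_self.trans (h r le_top)
  | coe b => exact h b le_rfl

section abs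
variable {C : Type*} [AddCommMonoid C] [PartialOrder C] [IsOrderedAddMonoid C] [Module ℝ≥0 C]

theorem Adm.hom_eq {q p : C → ℝ≥0∞} (h : Adm q p) (a : ℝ≥0) (x : C) :
    p (a • x) = a * p x := by
  refine le_antisymm (h.hom a x) ?_
  by_cases ha : a = 0
  · simp [ha]
  · have h1 := h.hom a⁻¹ (a • x)
    rw [smul_smul, inv_mul_cancel₀ ha, one_smul] at h1
    calc (a : ℝ≥0∞) * p x ≤ a * ((a⁻¹ : ℝ≥0) * p (a • x)) := by gcongr
      _ = p (a • x) := by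
        rw [← mul_assoc, ← ENNReal.coe_mul, mul_inv_cancel₀ ha]; simp

theorem exists_min {q p₀ : C → ℝ≥0∞} (h₀ : Adm q p₀) :
    ∃ p, Adm q p ∧ p ≤ p₀ ∧ ∀ p', Adm q p' → p' ≤ p → p ≤ p' := by
  obtain ⟨m, hm1, hm2⟩ := zorn_le_nonempty₀ (α := (C → ℝ≥0∞)ᵒᵈ)
    {p | Adm q (OrderDual.ofDual p)} (by
      intro c hc hch y hy
      have tot : ∀ u ∈ c, ∀ v ∈ c,
          OrderDual.ofDual u ≤ OrderDual.ofDual v ∨ OrderDual.ofDual v ≤ OrderDual.ofDual u := by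
        intro u hu v hv
        exact (hch.total hu hv).symm
      refine ⟨OrderDual.toDual (fun x => ⨅ u ∈ c, (OrderDual.ofDual u) x), ?_, ?_⟩
      · refine ⟨?_, ?_, ?_, ?_⟩
        · intro x z hxz
          exact iInf₂_mono fun u hu => (hc hu).mono _ _ hxz
        · intro a x
          show (⨅ u ∈ c, (OrderDual.ofDual u) (a • x)) ≤ a * ⨅ u ∈ c, (OrderDual.ofDual u) x
          by_cases ha : a = 0
          · subst ha
            refine (iInf₂_le y hy).trans ?_
            simpa using (hc hy).hom 0 x
          · rw [ENNReal.mul_iInf_of_ne (by simpa using ha) (by simp)]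
            refine le_iInf fun u => ?_
            rw [ENNReal.mul_iInf_of_ne (by simpa using ha) (by simp)]
            exact le_iInf fun hu => (iInf₂_le u hu).trans ((hc hu).hom a x)
        · intro x z
          show (⨅ u ∈ c, (OrderDual.ofDual u) (x + z)) ≤
            (⨅ u ∈ c, (OrderDual.ofDual u) x) + ⨅ u ∈ c, (OrderDual.ofDual u) z
          simp only [ENNReal.iInf_add, ENNReal.add_iInf]
          refine le_iInf₂ fun u hu => le_iInf₂ fun v hv => ?_
          rcases tot u hu v hv with h | h
          · exact (iInf₂_le u hu).trans (((hc hu).sub x z).trans (add_le_add (h x) le_rfl))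
          · exact (iInf₂_le v hv).trans (((hc hv).sub x z).trans (add_le_add le_rfl (h z)))
        · intro x
          exact le_iInf₂ fun u hu => (hc hu).ge x
      · intro u hu x
        exact iInf₂_le u hu) (OrderDual.toDual p₀) h₀
  exact ⟨OrderDual.ofDual m, hm2.1, hm1, fun p' hp' hle => hm2.2 (y := OrderDual.toDual p') hp' hle⟩

theorem improve {q p : C → ℝ≥0∞} (h : Adm q p)
    (hmin : ∀ p', Adm q p' → p' ≤ p → p ≤ p')
    (I : Set (C × ℝ≥0)) (h0 : (0, 0) ∈ I)
    (hadd : ∀ u ∈ I, ∀ v ∈ I, u + v ∈ I)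
    (hsm : ∀ (a : ℝ≥0), ∀ u ∈ I, (a • u.1, a * u.2) ∈ I)
    (hq : ∀ u ∈ I, ∀ z, q z + u.2 ≤ p (u.1 + z)) :
    ∀ u ∈ I, ∀ z, p z + u.2 ≤ p (u.1 + z) := by
  have hle : (fun z => ⨅ u ∈ I, (p (u.1 + z) - (u.2 : ℝ≥0∞))) ≤ p := by
    intro z
    refine (iInf₂_le (0, 0) h0).trans ?_
    simp
  have key := hmin (fun z => ⨅ u ∈ I, (p (u.1 + z) - (u.2 : ℝ≥0∞))) (by
    refine ⟨?_, ?_, ?_, ?_⟩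
    · intro x y hxy
      exact iInf₂_mono fun u hu => tsub_le_tsub_right (h.mono _ _ (add_le_add_right hxy _)) _
    · intro a x
      by_cases ha : a = 0
      · subst ha
        refine (hle _).trans ?_
        simpa using h.hom 0 x
      · rw [ENNReal.mul_iInf_of_ne (by simpa using ha) (by simp)]
        refine le_iInf fun u => ?_
        rw [ENNReal.mul_iInf_of_ne (by simpa using ha) (by simp)]
        refine le_iInf fun hu => (iInf₂_le _ (hsm a u hu)).trans ?_
        rw [ENNReal.mul_sub (by simp), ← smul_add, ENNReal.coe_mul]
        exact tsub_le_tsub_right (h.hom a _) _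
    · intro x y
      simp only [ENNReal.iInf_add, ENNReal.add_iInf]
      refine le_iInf₂ fun u hu => le_iInf₂ fun v hv => ?_
      refine (iInf₂_le _ (hadd _ hv _ hu)).trans ?_
      refine le_trans ?_ add_tsub_add_le_tsub_add_tsub
      rw [Prod.snd_add, ENNReal.coe_add, Prod.fst_add, add_add_add_comm]
      exact tsub_le_tsub_right (h.sub _ _) _
    · intro x
      exact le_iInf₂ fun u hu => ENNReal.le_sub_of_add_le_right (by simp) (hq u hu x)) hle
  intro u hu z
  have h1 := (key z).trans (iInf₂_le u hu)
  have h2 : (u.2 : ℝ≥0∞) ≤ p (u.1 + z) := le_trans le_add_self (hq u hu z)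
  calc p z + u.2 ≤ (p (u.1 + z) - u.2) + u.2 := by gcongr
    _ = p (u.1 + z) := tsub_add_cancel_of_le h2

theorem linear_of_min {q p : C → ℝ≥0∞} (h : Adm q p)
    (hmin : ∀ p', Adm q p' → p' ≤ p → p ≤ p')
    (qhom : ∀ (a : ℝ≥0) x, q (a • x) = a * q x)
    (qsup : ∀ x y, q x + q y ≤ q (x + y)) (x z : C) : p (x + z) = p x + p z := by
  have h1 := improve h hmin {u | (u.2 : ℝ≥0∞) ≤ q u.1} (by simp)
    (fun u hu v hv => by
      simp only [Set.mem_ofPred_eq, Prod.fst_add, Prod.snd_add, ENNReal.coe_add] at *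
      exact (add_le_add hu hv).trans (qsup _ _))
    (fun a u hu => by
      simp only [Set.mem_ofPred_eq, ENNReal.coe_mul, qhom] at *
      gcongr)
    (fun u hu z => by
      rw [add_comm u.1]
      exact (add_le_add le_rfl hu).trans ((qsup _ _).trans (h.ge _)))
  have h2 : ∀ x z, p z + q x ≤ p (x + z) := by
    intro x z
    exact add_le_of_nn fun r hr => h1 (x, r) hr z
  have h3 := improve h hmin {u | ∃ l : ℝ≥0, u.1 = l • x ∧ (u.2 : ℝ≥0∞) ≤ l * p x}
    ⟨0, by simp⟩
    (by
      rintro u ⟨l, hl, hl'⟩ v ⟨m, hm, hm'⟩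
      refine ⟨l + m, by simp [hl, hm, add_smul], ?_⟩
      simp only [Prod.snd_add, ENNReal.coe_add, add_mul]
      exact add_le_add hl' hm')
    (by
      rintro a u ⟨l, hl, hl'⟩
      refine ⟨a * l, by simp [hl, mul_smul], ?_⟩
      simp only [ENNReal.coe_mul, mul_assoc]
      gcongr)
    (by
      rintro u ⟨l, hl, hl'⟩ z
      rw [hl]
      calc q z + u.2 ≤ q z + p (l • x) := by rw [h.hom_eq]; gcongr
        _ ≤ p (l • x + z) := by rw [add_comm, add_comm _ z]; exact h2 _ _)
  refine le_antisymm (h.sub x z) ?_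
  rw [add_comm (p x)]
  exact add_le_of_nn fun r hr => h3 (x, r) ⟨1, by simp, by simpa using hr⟩ z

end abs

section conc
variable {X : Type*} [TopologicalSpace X]

theorem lsc_mul (a : ℝ≥0) {f : X → ℝ≥0∞} (hf : LowerSemicontinuous f) :
    LowerSemicontinuous (fun x => (a : ℝ≥0∞) * f x) :=
  (ENNReal.continuous_const_mul (by simp)).comp_lowerSemicontinuous hf
    (fun _ _ h => mul_le_mul_right h _)

variable (X) in
/-- The cone of lower semicontinuous maps. -/
def L : Submodule ℝ≥0 (X → ℝ≥0∞) where
  carrier := {f | LowerSemicontinuous f}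
  zero_mem' := lowerSemicontinuous_const
  add_mem' := fun hf hg => LowerSemicontinuous.add hf hg
  smul_mem' := fun a _ hf => lsc_mul a hf

instance : IsOrderedAddMonoid (L X) where
  add_le_add_left := fun _ _ h _ x => add_le_add_left (h x) _

theorem scott_of_min {q p : L X → ℝ≥0∞} (h : Adm q p)
    (hmin : ∀ p', Adm q p' → p' ≤ p → p ≤ p')
    (hq : ∀ (x : L X) (D : Set (L X)), D.Nonempty → DirectedOn (· ≤ ·) D →
      (∀ t, x.1 t ≤ ⨆ d ∈ D, d.1 t) → q x ≤ ⨆ d ∈ D, q d) :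
    ∀ (x : L X) (D : Set (L X)), D.Nonempty → DirectedOn (· ≤ ·) D →
      (∀ t, x.1 t ≤ ⨆ d ∈ D, d.1 t) → p x ≤ ⨆ d ∈ D, p d := by
  let p1 : L X → ℝ≥0∞ := fun x => ⨅ (D : Set (L X)) (_ : D.Nonempty ∧ DirectedOn (· ≤ ·) D ∧
      (∀ t, x.1 t ≤ ⨆ d ∈ D, d.1 t)), ⨆ d ∈ D, p d
  have hle : p1 ≤ p := by
    intro x
    refine (iInf₂_le {x} ⟨Set.singleton_nonempty x, directedOn_singleton x, ?_⟩).trans ?_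
    · simp
    · simp
  have key := hmin p1 (by
    refine ⟨?_, ?_, ?_, ?_⟩
    · intro x y hxy
      refine le_iInf₂ fun D hD => iInf₂_le D ⟨hD.1, hD.2.1, fun t => (hxy t).trans (hD.2.2 t)⟩
    · intro a x
      by_cases ha : a = 0
      · subst ha
        refine (hle _).trans ?_
        simpa using h.hom 0 x
      · show _ ≤ (a : ℝ≥0∞) * (⨅ (D : Set (L X)) (_ : _), ⨆ d ∈ D, p d)
        rw [ENNReal.mul_iInf_of_ne (by simpa using ha) (by simp)]
        refine le_iInf fun D => ?_
        rw [ENNReal.mul_iInf_of_ne (by simpa using ha) (by simp)]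
        refine le_iInf fun hD => ?_
        refine (iInf₂_le ((fun d => a • d) '' D) ⟨hD.1.image _, ?_, ?_⟩).trans ?_
        rotate_left
        · rintro _ ⟨d, hd, rfl⟩ _ ⟨e, he, rfl⟩
          obtain ⟨f, hf, h1, h2⟩ := hD.2.1 d hd e he
          refine ⟨_, ⟨f, hf, rfl⟩, fun t => ?_, fun t => ?_⟩
          · exact mul_le_mul_right (h1 t) _
          · exact mul_le_mul_right (h2 t) _
        · intro t
          show (a : ℝ≥0∞) * x.1 t ≤ _
          rw [iSup_image]
          show _ ≤ ⨆ d ∈ D, (a : ℝ≥0∞) * d.1 t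
          simp only [← ENNReal.mul_iSup]
          exact mul_le_mul_right (hD.2.2 t) _
        · rw [iSup_image]
          simp only [ENNReal.mul_iSup]
          exact iSup₂_mono fun d _ => h.hom a d
    · intro x y
      show _ ≤ (⨅ (D : Set (L X)) (_ : _), ⨆ d ∈ D, p d) +
        (⨅ (D : Set (L X)) (_ : _), ⨆ d ∈ D, p d)
      simp only [ENNReal.iInf_add, ENNReal.add_iInf]
      refine le_iInf₂ fun E hE => le_iInf₂ fun D hD => ?_
      refine (iInf₂_le (Set.image2 (· + ·) D E) ⟨hD.1.image2 hE.1, ?_, ?_⟩).trans ?_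
      rotate_left
      · rintro _ ⟨d, hd, e, he, rfl⟩ _ ⟨d', hd', e', he', rfl⟩
        obtain ⟨f, hf, h1, h2⟩ := hD.2.1 d hd d' hd'
        obtain ⟨g, hg, h3, h4⟩ := hE.2.1 e he e' he'
        exact ⟨_, ⟨f, hf, g, hg, rfl⟩, add_le_add h1 h3, add_le_add h2 h4⟩
      · intro t
        refine (add_le_add (hD.2.2 t) (hE.2.2 t)).trans ?_
        refine ENNReal.biSup_add_biSup_le' hD.1 hE.1 fun d hd e he => ?_
        exact le_iSup₂_of_le (d + e) ⟨d, hd, e, he, rfl⟩ le_rfl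
      · refine iSup₂_le ?_
        rintro _ ⟨d, hd, e, he, rfl⟩
        exact (h.sub d e).trans (add_le_add (le_iSup₂_of_le d hd le_rfl)
          (le_iSup₂_of_le e he le_rfl))
    · intro x
      exact le_iInf₂ fun D hD => (hq x D hD.1 hD.2.1 hD.2.2).trans
        (iSup₂_mono fun d _ => h.ge d)) hle
  intro x D h1 h2 h3
  exact (key x).trans (iInf₂_le D ⟨h1, h2, h3⟩)

theorem biSup_L (D : Set (L X)) (G : (X → ℝ≥0∞) → ℝ≥0∞) :
    (⨆ h ∈ (Subtype.val '' D : Set (X → ℝ≥0∞)), G h) = ⨆ d ∈ D, G d.1 := by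
  rw [iSup_image]

theorem lsc_biSup (D : Set (X → ℝ≥0∞)) (hD : ∀ h ∈ D, LowerSemicontinuous h) :
    LowerSemicontinuous (fun x => ⨆ h ∈ D, h x) :=
  lowerSemicontinuous_biSup hD

theorem main (Fm Fp : (X → ℝ≥0∞) → ℝ≥0∞)
    (hFm : IsPrevision Fm) (hFmsup : PSuperlinear Fm)
    (hFp : IsPrevision Fp) (hFpsub : PSublinear Fp)
    (hle : ∀ h : X → ℝ≥0∞, LowerSemicontinuous h → Fm h ≤ Fp h) :
    ∃ Λ : (X → ℝ≥0∞) → ℝ≥0∞, IsPrevision Λ ∧ PLinear Λ ∧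
        (∀ h : X → ℝ≥0∞, LowerSemicontinuous h → Fm h ≤ Λ h) ∧
        (∀ h : X → ℝ≥0∞, LowerSemicontinuous h → Λ h ≤ Fp h) := by
  classical
  obtain ⟨p, hp, hpF, hmin⟩ := exists_min (q := fun x : L X => Fm x.1) (p₀ := fun x => Fp x.1)
    ⟨fun x y hxy => hFp.1 x.2 y.2 hxy, fun a x => (hFp.2.2 a x.1 x.2).le,
      fun x y => hFpsub _ _ x.2 y.2, fun x => hle _ x.2⟩
  have hlin := linear_of_min hp hmin (fun a x => hFm.2.2 a x.1 x.2)
    (fun x y => hFmsup _ _ x.2 y.2)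
  have hsc := scott_of_min hp hmin (by
    intro x D h1 h2 h3
    have hl : ∀ h ∈ (Subtype.val '' D : Set (X → ℝ≥0∞)), LowerSemicontinuous h := by
      rintro _ ⟨d, _, rfl⟩
      exact d.2
    have := hFm.2.1 (Subtype.val '' D) (h1.image _) hl (by
        rintro _ ⟨d, hd, rfl⟩ _ ⟨e, he, rfl⟩
        obtain ⟨f, hf, h1, h2⟩ := h2 d hd e he
        exact ⟨_, ⟨f, hf, rfl⟩, h1, h2⟩)
    rw [biSup_L] at this
    rw [← this]
    refine hFm.1 x.2 (lsc_biSup _ hl) fun t => ?_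
    show _ ≤ ⨆ h ∈ _, _
    rw [iSup_image]
    exact h3 t)
  let Λ : (X → ℝ≥0∞) → ℝ≥0∞ := fun h => if H : LowerSemicontinuous h then p ⟨h, H⟩ else 0
  have hΛ : ∀ (h : X → ℝ≥0∞) (H : LowerSemicontinuous h), Λ h = p ⟨h, H⟩ := fun h H => dif_pos H
  have hmono : ∀ ⦃h h' : X → ℝ≥0∞⦄, LowerSemicontinuous h → LowerSemicontinuous h' →
      h ≤ h' → Λ h ≤ Λ h' := by
    intro h h' H H' hh
    rw [hΛ h H, hΛ h' H']
    exact hp.mono _ _ hh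
  refine ⟨Λ, ⟨hmono, ?_, ?_⟩, ?_, ?_, ?_⟩
  · intro D hD hl hdir
    refine le_antisymm ?_ (iSup₂_le fun h hh => hmono (hl h hh) (lsc_biSup D hl) fun t =>
      le_iSup₂_of_le (f := fun (h : X → ℝ≥0∞) (_ : h ∈ D) => h t) h hh le_rfl)
    rw [hΛ _ (lsc_biSup D hl)]
    refine (hsc _ {d | d.1 ∈ D} ?_ ?_ ?_).trans ?_
    · obtain ⟨h, hh⟩ := hD
      exact ⟨⟨h, hl h hh⟩, hh⟩
    · intro d hd e he
      obtain ⟨f, hf, h1, h2⟩ := hdir d.1 hd e.1 he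
      exact ⟨⟨f, hl f hf⟩, hf, h1, h2⟩
    · intro t
      exact iSup₂_le fun h hh => le_iSup₂_of_le
        (f := fun (d : L X) (_ : d ∈ {d : L X | d.1 ∈ D}) => d.1 t) ⟨h, hl h hh⟩ hh le_rfl
    · refine iSup₂_le fun d hd => le_iSup₂_of_le d.1 hd ?_
      rw [hΛ d.1 d.2]
  · intro a h H
    rw [hΛ h H, hΛ _ (lsc_mul a H), ← hp.hom_eq]
    rfl
  · intro h h' H H'
    rw [hΛ h H, hΛ h' H', hΛ _ (H.add H'), ← hlin]
    rfl
  · intro h H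
    rw [hΛ h H]
    exact hp.ge ⟨h, H⟩
  · intro h H
    rw [hΛ h H]
    exact hpF ⟨h, H⟩

theorem at_zero {F : (X → ℝ≥0∞) → ℝ≥0∞} (hF : IsPrevision F) : F (fun _ => 0) = 0 := by
  have := hF.2.2 0 (fun _ => 0) lowerSemicontinuous_const
  simpa using this

end conc

end Sandwich

/-- sandwich: for a superlinear prevision `F⁻` and a sublinear prevision
`F⁺`, there is a linear prevision `Λ` with `F⁻ ≤ Λ ≤ F⁺` iff `F⁻ ≤ F⁺` (pointwise on
lower semicontinuous maps); moreover, when `F⁻ ≤ F⁺`, `Λ` can be chosen subnormalized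
if `F⁺` is, and normalized if both `F⁻` and `F⁺` are. -/
theorem statement14 {X : Type*} [TopologicalSpace X] (Fm Fp : (X → ℝ≥0∞) → ℝ≥0∞)
    (hFm : IsPrevision Fm) (hFmsup : PSuperlinear Fm)
    (hFp : IsPrevision Fp) (hFpsub : PSublinear Fp) :
    ((∃ Λ : (X → ℝ≥0∞) → ℝ≥0∞, IsPrevision Λ ∧ PLinear Λ ∧
        (∀ h : X → ℝ≥0∞, LowerSemicontinuous h → Fm h ≤ Λ h) ∧
        (∀ h : X → ℝ≥0∞, LowerSemicontinuous h → Λ h ≤ Fp h)) ↔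
      (∀ h : X → ℝ≥0∞, LowerSemicontinuous h → Fm h ≤ Fp h)) ∧
    ((∀ h : X → ℝ≥0∞, LowerSemicontinuous h → Fm h ≤ Fp h) → PSubnormalized Fp →
      ∃ Λ : (X → ℝ≥0∞) → ℝ≥0∞, IsPrevision Λ ∧ PLinear Λ ∧ PSubnormalized Λ ∧
        (∀ h : X → ℝ≥0∞, LowerSemicontinuous h → Fm h ≤ Λ h) ∧
        (∀ h : X → ℝ≥0∞, LowerSemicontinuous h → Λ h ≤ Fp h)) ∧
    ((∀ h : X → ℝ≥0∞, LowerSemicontinuous h → Fm h ≤ Fp h) →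
        PNormalized Fm → PNormalized Fp →
      ∃ Λ : (X → ℝ≥0∞) → ℝ≥0∞, IsPrevision Λ ∧ PLinear Λ ∧ PNormalized Λ ∧
        (∀ h : X → ℝ≥0∞, LowerSemicontinuous h → Fm h ≤ Λ h) ∧
        (∀ h : X → ℝ≥0∞, LowerSemicontinuous h → Λ h ≤ Fp h)) := by
  have M := Sandwich.main Fm Fp hFm hFmsup hFp hFpsub
  have l0 : LowerSemicontinuous (fun _ : X => (0 : ℝ≥0∞)) := lowerSemicontinuous_const
  have l1 : LowerSemicontinuous (fun _ : X => (1 : ℝ≥0∞)) := lowerSemicontinuous_const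
  refine ⟨⟨?_, M⟩, ?_, ?_⟩
  · rintro ⟨Λ, -, -, h1, h2⟩ h H
    exact (h1 h H).trans (h2 h H)
  · intro hle hs
    obtain ⟨Λ, hΛ, hlin, h1, h2⟩ := M hle
    refine ⟨Λ, hΛ, hlin, ?_, h1, h2⟩
    intro h H
    rw [hlin _ _ l1 H]
    refine add_le_add ((h2 _ l1).trans ?_) le_rfl
    simpa [Sandwich.at_zero hFp] using hs _ l0
  · intro hle hm hs
    obtain ⟨Λ, hΛ, hlin, h1, h2⟩ := M hle
    refine ⟨Λ, hΛ, hlin, ?_, h1, h2⟩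
    intro h H
    rw [hlin _ _ l1 H]
    congr 1
    refine le_antisymm ((h2 _ l1).trans ?_) (le_trans ?_ (h1 _ l1))
    · simpa [Sandwich.at_zero hFp] using (hs _ l0).le
    · simpa [Sandwich.at_zero hFm] using (hm _ l0).ge
end

section
/- Let X be a topological space and P a prevision on X. The set {F : F is a sublinear prevision on X and P(h) ≤ F(h) for every h ∈ ℒX} is nonempty, upward-closed with respect to the pointwise ordering, and compact in the set of sublinear previsions on X equipped with the weak topology. -/
open scoped ENNReal NNReal

/-- Type synonym for functionals on `ℒX`, carrying the weak topology. -/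
def Functional (X : Type*) : Type _ := (X → ℝ≥0∞) → ℝ≥0∞

/-- The weak topology, generated by the subbasic open sets `[h > r] = {F | F h > r}`
for `h` lower semicontinuous and `r ∈ [0,∞)`. -/
instance Functional.instTopologicalSpace (X : Type*) [TopologicalSpace X] :
    TopologicalSpace (Functional X) :=
  TopologicalSpace.generateFrom
    {S | ∃ (h : X → ℝ≥0∞) (r : ℝ≥0), LowerSemicontinuous h ∧
      S = {F : Functional X | (r : ℝ≥0∞) < F h}}

/-- Directed families of lower semicontinuous maps whose supremum is above `h`. -/
def P15Good {X : Type*} [TopologicalSpace X] (h : X → ℝ≥0∞) (D : Set (X → ℝ≥0∞)) : Prop :=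
  D.Nonempty ∧ (∀ d ∈ D, LowerSemicontinuous d) ∧ DirectedOn (· ≤ ·) D ∧
    ∀ x, h x ≤ ⨆ d ∈ D, d x

/-- Not necessarily continuous sublinear functionals above `P`. -/
structure P15Core {X : Type*} [TopologicalSpace X] (P M : (X → ℝ≥0∞) → ℝ≥0∞) : Prop where
  mono : ∀ h h' : X → ℝ≥0∞, LowerSemicontinuous h → LowerSemicontinuous h' → h ≤ h' → M h ≤ M h'
  zero : M (fun _ => 0) = 0
  smul : ∀ (a : ℝ≥0) (h : X → ℝ≥0∞), a ≠ 0 → LowerSemicontinuous h →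
      M (fun x => (a : ℝ≥0∞) * h x) ≤ (a : ℝ≥0∞) * M h
  add : ∀ h h' : X → ℝ≥0∞, LowerSemicontinuous h → LowerSemicontinuous h' →
    M (fun x => h x + h' x) ≤ M h + M h'
  ge : ∀ h : X → ℝ≥0∞, LowerSemicontinuous h → P h ≤ M h

lemma p15_lsc_smul {X : Type*} [TopologicalSpace X] (a : ℝ≥0) (h : X → ℝ≥0∞)
    (hh : LowerSemicontinuous h) : LowerSemicontinuous (fun x => (a : ℝ≥0∞) * h x) := by
  have hc : Continuous (fun y : ℝ≥0∞ => (a : ℝ≥0∞) * y) :=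
    ENNReal.continuous_const_mul ENNReal.coe_ne_top
  exact hc.comp_lowerSemicontinuous hh (fun _ _ hab => mul_le_mul_right hab _)

open Classical in
/-- One step of the continuous regularization. -/
noncomputable def p15reg {X : Type*} [TopologicalSpace X] (M : (X → ℝ≥0∞) → ℝ≥0∞) :
    (X → ℝ≥0∞) → ℝ≥0∞ := fun h =>
  if LowerSemicontinuous h then ⨅ D : {D // P15Good h D}, ⨆ d ∈ D.1, M d else M h

lemma p15reg_le_sup {X : Type*} [TopologicalSpace X] (M : (X → ℝ≥0∞) → ℝ≥0∞)
    (h : X → ℝ≥0∞) (hh : LowerSemicontinuous h) (D : Set (X → ℝ≥0∞)) (hD : P15Good h D) :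
    p15reg M h ≤ ⨆ d ∈ D, M d := by
  rw [p15reg, if_pos hh]
  exact iInf_le (fun D : {D // P15Good h D} => ⨆ d ∈ D.1, M d) ⟨D, hD⟩

lemma p15reg_le {X : Type*} [TopologicalSpace X] (M : (X → ℝ≥0∞) → ℝ≥0∞) : p15reg M ≤ M := by
  intro h
  by_cases hh : LowerSemicontinuous h
  · refine (p15reg_le_sup M h hh {h} ⟨by simp, by simpa using hh, ?_, by simp⟩).trans (by simp)
    exact directedOn_singleton h
  · rw [p15reg, if_neg hh]

lemma p15reg_core {X : Type*} [TopologicalSpace X] (P M : (X → ℝ≥0∞) → ℝ≥0∞)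
    (hP : IsPrevision P) (hM : P15Core P M) : P15Core P (p15reg M) where
  mono h h' hh hh' hle := by
    conv_rhs => rw [p15reg, if_pos hh']
    refine le_iInf fun D => p15reg_le_sup M h hh D.1 ?_
    obtain ⟨h1, h2, h3, h4⟩ := D.2
    exact ⟨h1, h2, h3, fun x => (hle x).trans (h4 x)⟩
  zero := le_antisymm ((p15reg_le M _).trans hM.zero.le) (bot_le)
  smul a h ha hh := by
    have ha' : (a : ℝ≥0∞) ≠ 0 := by simpa using ha
    conv_rhs => rw [p15reg, if_pos hh]
    rw [ENNReal.mul_iInf_of_ne ha' ENNReal.coe_ne_top]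
    refine le_iInf fun D => ?_
    obtain ⟨h1, h2, h3, h4⟩ := D.2
    refine (p15reg_le_sup M _ (p15_lsc_smul a h hh)
      ((fun d x => (a : ℝ≥0∞) * d x) '' D.1) ⟨h1.image _, ?_, ?_, ?_⟩).trans ?_
    · rintro _ ⟨d, hd, rfl⟩
      exact p15_lsc_smul a d (h2 d hd)
    · rintro _ ⟨d, hd, rfl⟩ _ ⟨e, he, rfl⟩
      obtain ⟨f, hf, hdf, hef⟩ := h3 d hd e he
      refine ⟨_, ⟨f, hf, rfl⟩, fun x => ?_, fun x => ?_⟩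
      · exact mul_le_mul_right (hdf x) _
      · exact mul_le_mul_right (hef x) _
    · intro x
      rw [iSup_image]
      simp only
      simp_rw [← ENNReal.mul_iSup]
      exact mul_le_mul_right (h4 x) _
    · rw [iSup_image]
      simp_rw [ENNReal.mul_iSup]
      exact iSup₂_mono fun d hd => hM.smul a d ha (h2 d hd)
  add h h' hh hh' := by
    conv_rhs => rw [p15reg, p15reg, if_pos hh, if_pos hh']
    rw [ENNReal.iInf_add]
    refine le_iInf fun D => ?_
    rw [ENNReal.add_iInf]
    refine le_iInf fun E => ?_
    obtain ⟨h1, h2, h3, h4⟩ := D.2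
    obtain ⟨k1, k2, k3, k4⟩ := E.2
    refine (p15reg_le_sup M _ (hh.add hh')
      (Set.image2 (fun d e x => d x + e x) D.1 E.1) ⟨h1.image2 k1, ?_, ?_, ?_⟩).trans ?_
    · rintro _ ⟨d, hd, e, he, rfl⟩
      exact (h2 d hd).add (k2 e he)
    · rintro _ ⟨d, hd, e, he, rfl⟩ _ ⟨d', hd', e', he', rfl⟩
      obtain ⟨f, hf, hf1, hf2⟩ := h3 d hd d' hd'
      obtain ⟨g, hg, hg1, hg2⟩ := k3 e he e' he'
      exact ⟨_, ⟨f, hf, g, hg, rfl⟩, fun x => add_le_add (hf1 x) (hg1 x),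
        fun x => add_le_add (hf2 x) (hg2 x)⟩
    · intro x
      refine (add_le_add (h4 x) (k4 x)).trans ?_
      refine ENNReal.biSup_add_biSup_le h1 k1 fun d hd e he => ?_
      exact le_iSup₂_of_le (fun x => d x + e x) ⟨d, hd, e, he, rfl⟩ le_rfl
    · refine iSup₂_le ?_
      rintro _ ⟨d, hd, e, he, rfl⟩
      exact (hM.add d e (h2 d hd) (k2 e he)).trans
        (add_le_add (le_iSup₂_of_le d hd le_rfl) (le_iSup₂_of_le e he le_rfl))
  ge h hh := by
    rw [p15reg, if_pos hh]
    refine le_iInf fun D => ?_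
    obtain ⟨h1, h2, h3, h4⟩ := D.2
    have hs : LowerSemicontinuous (fun x => ⨆ d ∈ D.1, d x) := lowerSemicontinuous_biSup h2
    refine (hP.1 hh hs h4).trans ?_
    rw [hP.2.1 D.1 h1 h2 h3]
    exact iSup₂_mono fun d hd => hM.ge d (h2 d hd)

lemma p15_exists {X : Type*} [TopologicalSpace X] (P L : (X → ℝ≥0∞) → ℝ≥0∞)
    (hP : IsPrevision P) (hL : P15Core P L) :
    ∃ G : (X → ℝ≥0∞) → ℝ≥0∞, IsPrevision G ∧ PSublinear G ∧
      (∀ h, LowerSemicontinuous h → P h ≤ G h) ∧ G ≤ L := by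
  obtain ⟨M, hML, hM⟩ : ∃ M ≤ L, Minimal (fun M => P15Core P M) M := by
    refine zorn_le_nonempty₀ (α := ((X → ℝ≥0∞) → ℝ≥0∞)ᵒᵈ) {M | P15Core P M} ?_ L hL
    intro c hc hchain y hy
    have hne : Nonempty c := ⟨⟨y, hy⟩⟩
    refine ⟨fun h => ⨅ M : c, M.1 h, ?_, fun z hz h => iInf_le (fun M : c => M.1 h) ⟨z, hz⟩⟩
    refine ⟨?_, ?_, ?_, ?_, ?_⟩
    · intro h h' hh hh' hle
      exact iInf_mono fun M => (hc M.2).mono h h' hh hh' hle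
    · exact le_antisymm ((iInf_le _ ⟨y, hy⟩).trans (hc hy).zero.le) (bot_le)
    · intro a h ha hh
      have ha' : (a : ℝ≥0∞) ≠ 0 := by simpa using ha
      rw [ENNReal.mul_iInf_of_ne ha' ENNReal.coe_ne_top]
      exact iInf_mono fun M => (hc M.2).smul a h ha hh
    · intro h h' hh hh'
      rw [ENNReal.iInf_add_iInf]
      · exact iInf_mono fun M => (hc M.2).add h h' hh hh'
      · intro M N
        rcases hchain.total M.2 N.2 with hle | hle
        · exact ⟨N, add_le_add (hle h) le_rfl⟩
        · exact ⟨M, add_le_add le_rfl (hle h')⟩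
    · intro h hh
      exact le_iInf fun M => (hc M.2).ge h hh
  have hMc := hM.prop
  have hreg : M ≤ p15reg M := hM.le_of_le (p15reg_core P M hP hMc) (p15reg_le M)
  refine ⟨M, ⟨fun h h' hh hh' hle => hMc.mono h h' hh hh' hle, ?_, ?_⟩, hMc.add, hMc.ge, hML⟩
  · intro D h1 h2 h3
    have hs : LowerSemicontinuous (fun x => ⨆ d ∈ D, d x) := lowerSemicontinuous_biSup h2
    apply le_antisymm
    · exact (hreg _).trans (p15reg_le_sup M _ hs D ⟨h1, h2, h3, fun x => le_rfl⟩)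
    · exact iSup₂_le fun d hd => hMc.mono d _ (h2 d hd) hs
        fun x => le_iSup₂_of_le (f := fun (d : X → ℝ≥0∞) (_ : d ∈ D) => d x) d hd le_rfl
  · intro a h hh
    by_cases ha : a = 0
    · subst ha
      simpa using hMc.zero
    · refine le_antisymm (hMc.smul a h ha hh) ?_
      have h1 := hMc.smul a⁻¹ _ (inv_ne_zero ha) (p15_lsc_smul a h hh)
      have h2 : (fun x => ((a⁻¹ : ℝ≥0) : ℝ≥0∞) * ((a : ℝ≥0∞) * h x)) = h := by
        funext x
        rw [← mul_assoc, ← ENNReal.coe_mul, inv_mul_cancel₀ ha]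
        simp
      rw [h2] at h1
      calc (a : ℝ≥0∞) * M h ≤ a * (((a⁻¹ : ℝ≥0) : ℝ≥0∞) * M (fun x => (a : ℝ≥0∞) * h x)) := by
            gcongr
        _ = _ := by
            rw [← mul_assoc, ← ENNReal.coe_mul, mul_inv_cancel₀ ha]
            simp

open Filter Topology in
lemma p15_compact {X : Type*} [TopologicalSpace X]
    (P : Functional X) (hP : IsPrevision P) :
    IsCompact {F : {F : Functional X // IsPrevision F ∧ PSublinear F} |
        ∀ h : X → ℝ≥0∞, LowerSemicontinuous h → P h ≤ F.1 h} := by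
  rw [isCompact_iff_ultrafilter_le_nhds]
  intro f hf
  have hlim : ∀ h : X → ℝ≥0∞, ∃ a : ℝ≥0∞,
      Tendsto (fun F : {F : Functional X // IsPrevision F ∧ PSublinear F} => F.1 h) f (𝓝 a) := by
    intro h
    obtain ⟨a, -, ha⟩ := isCompact_univ.ultrafilter_le_nhds
      (f.map (fun F : {F : Functional X // IsPrevision F ∧ PSublinear F} => F.1 h)) (by simp)
    exact ⟨a, ha⟩
  choose L hL using hlim
  have hfs : ∀ᶠ F in (f : Filter _), F ∈ {F : {F : Functional X // IsPrevision F ∧ PSublinear F} |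
        ∀ h : X → ℝ≥0∞, LowerSemicontinuous h → P h ≤ F.1 h} := le_principal_iff.1 hf
  have hcore : P15Core P L := by
    refine ⟨?_, ?_, ?_, ?_, ?_⟩
    · intro h h' hh hh' hle
      exact le_of_tendsto_of_tendsto' (hL h) (hL h') fun F => F.2.1.1 hh hh' hle
    · refine tendsto_nhds_unique (hL _) (tendsto_const_nhds.congr fun F => ?_)
      have := F.2.1.2.2 0 (fun _ => 0) lowerSemicontinuous_const
      simpa using this.symm
    · intro a h ha hh
      refine le_of_tendsto_of_tendsto' (hL _)
        (ENNReal.Tendsto.const_mul (hL h) (Or.inr ENNReal.coe_ne_top)) fun F => ?_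
      exact (F.2.1.2.2 a h hh).le
    · intro h h' hh hh'
      exact le_of_tendsto_of_tendsto' (hL _) ((hL h).add (hL h')) fun F => F.2.2 h h' hh hh'
    · intro h hh
      exact ge_of_tendsto (hL h) (hfs.mono fun F hF => hF h hh)
  obtain ⟨G, hG1, hG2, hG3, hG4⟩ := p15_exists P L hP hcore
  refine ⟨⟨G, hG1, hG2⟩, hG3, ?_⟩
  refine le_trans ?_ (Topology.IsInducing.subtypeVal.nhds_eq_comap _).ge
  refine map_le_iff_le_comap.1 ?_
  refine TopologicalSpace.tendsto_nhds_generateFrom_iff.2 ?_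
  rintro _ ⟨h, r, hh, rfl⟩ hr
  exact (hL h).eventually (lt_mem_nhds (lt_of_lt_of_le hr (hG4 h)))

open Classical in
lemma p15_nonempty {X : Type*} [TopologicalSpace X]
    (P : Functional X) (hP : IsPrevision P) :
    {F : {F : Functional X // IsPrevision F ∧ PSublinear F} |
        ∀ h : X → ℝ≥0∞, LowerSemicontinuous h → P h ≤ F.1 h}.Nonempty := by
  have hP0 : P (fun _ => 0) = 0 := by
    simpa using hP.2.2 0 (fun _ => 0) lowerSemicontinuous_const
  have hcore : P15Core P (fun h => if h = (fun _ => 0) then 0 else ⊤) := by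
    refine ⟨?_, by simp, ?_, ?_, ?_⟩
    · intro h h' _ _ hle
      by_cases h0 : h' = fun _ => 0
      · have : h = fun _ => 0 := by
          subst h0
          funext x
          exact le_antisymm (hle x) (bot_le)
        simp [this]
      · simp [h0]
    · intro a h ha _
      by_cases h0 : h = fun _ => 0
      · simp [h0]
      · simp [h0, ENNReal.mul_top, ha]
    · intro h h' _ _
      by_cases h0 : h = fun _ => 0
      · simp [h0]
      · simp [h0]
    · intro h _
      by_cases h0 : h = fun _ => 0
      · subst h0
        simp [hP0]
      · simp [h0]
  obtain ⟨G, hG1, hG2, hG3, -⟩ := p15_exists P _ hP hcore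
  exact ⟨⟨G, hG1, hG2⟩, hG3⟩

/-- for every prevision `P`, the set of sublinear previsions above `P` is
nonempty, upward-closed for the pointwise ordering, and compact in the set of sublinear
previsions with the weak topology. -/
theorem statement15 {X : Type*} [TopologicalSpace X]
    (P : Functional X) (hP : IsPrevision P) :
    {F : {F : Functional X // IsPrevision F ∧ PSublinear F} |
        ∀ h : X → ℝ≥0∞, LowerSemicontinuous h → P h ≤ F.1 h}.Nonempty ∧
    (∀ F G : {F : Functional X // IsPrevision F ∧ PSublinear F},
      (∀ h : X → ℝ≥0∞, LowerSemicontinuous h → P h ≤ F.1 h) →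
      (∀ h : X → ℝ≥0∞, LowerSemicontinuous h → F.1 h ≤ G.1 h) →
      (∀ h : X → ℝ≥0∞, LowerSemicontinuous h → P h ≤ G.1 h)) ∧
    IsCompact {F : {F : Functional X // IsPrevision F ∧ PSublinear F} |
        ∀ h : X → ℝ≥0∞, LowerSemicontinuous h → P h ≤ F.1 h} := by
  exact ⟨p15_nonempty P hP, fun F G hF hFG h hh => (hF h hh).trans (hFG h hh),
    p15_compact P hP⟩
end

section
/- Let X be a locally compact topological space. For every prevision P on X and every h ∈ ℒX, P(h) = sup{F(h) : F a superlinear prevision on X with F ≤ P pointwise}, i.e. every prevision on a locally compact space is the pointwise supremum of the superlinear previsions below it. -/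
open scoped ENNReal NNReal

noncomputable def GG {X : Type*} (s : Finset (Set X × ℝ≥0)) (g : X → ℝ≥0∞) : ℝ≥0∞ :=
  ⨅ p ∈ s, ⨅ x ∈ p.1, g x / (p.2 : ℝ≥0∞)

noncomputable def HH {X : Type*} [TopologicalSpace X] (s : Finset (Set X × ℝ≥0)) :
    X → ℝ≥0∞ :=
  fun x => ⨆ p ∈ s, (interior p.1).indicator (fun _ => (p.2 : ℝ≥0∞)) x

theorem GG_mono {X : Type*} (s : Finset (Set X × ℝ≥0)) {g g' : X → ℝ≥0∞} (h : g ≤ g') :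
    GG s g ≤ GG s g' := by
  unfold GG
  refine iInf₂_mono fun p _ => iInf₂_mono fun x _ => ?_
  exact ENNReal.div_le_div_right (h x) _

theorem GG_add {X : Type*} (s : Finset (Set X × ℝ≥0)) (g g' : X → ℝ≥0∞) :
    GG s g + GG s g' ≤ GG s (fun x => g x + g' x) := by
  unfold GG
  refine le_iInf₂ fun p hp => le_iInf₂ fun x hx => ?_
  rw [ENNReal.add_div]
  exact add_le_add (iInf₂_le_of_le p hp (iInf₂_le x hx)) (iInf₂_le_of_le p hp (iInf₂_le x hx))

theorem GG_smul {X : Type*} (s : Finset (Set X × ℝ≥0)) (hs : ∃ p ∈ s, p.1.Nonempty)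
    (a : ℝ≥0) (g : X → ℝ≥0∞) :
    GG s (fun x => (a : ℝ≥0∞) * g x) = a * GG s g := by
  unfold GG
  rcases eq_or_ne a 0 with rfl | ha
  · obtain ⟨p, hp, x, hx⟩ := hs
    simp only [ENNReal.coe_zero, zero_mul]
    refine le_antisymm ?_ bot_le
    refine (iInf₂_le_of_le p hp (iInf₂_le x hx)).trans (by simp)
  · have h0 : (a : ℝ≥0∞) ≠ 0 := by simpa using ha
    simp only [ENNReal.mul_iInf_of_ne h0 ENNReal.coe_ne_top, mul_div_assoc]

theorem GG_scott {X : Type*} [TopologicalSpace X] (s : Finset (Set X × ℝ≥0))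
    (hs : ∀ p ∈ s, IsCompact p.1 ∧ 0 < p.2)
    (D : Set (X → ℝ≥0∞)) (hne : D.Nonempty) (hl : ∀ h ∈ D, LowerSemicontinuous h)
    (hD : DirectedOn (· ≤ ·) D) :
    GG s (fun x => ⨆ h ∈ D, h x) = ⨆ h ∈ D, GG s h := by
  apply le_antisymm
  · refine le_of_forall_lt fun t ht => ?_
    obtain ⟨t', ht, ht'⟩ := exists_between ht
    refine ht.trans_le ?_
    have key : ∀ p ∈ s, ∃ d ∈ D, ∀ x ∈ p.1, t' * p.2 < d x := by
      intro p hp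
      have : Nonempty D := hne.to_subtype
      suffices hsuf : ∃ d : D, p.1 ⊆ {y | t' * p.2 < d.1 y} by
        obtain ⟨d, hd⟩ := hsuf
        exact ⟨d.1, d.2, fun x hx => hd hx⟩
      refine (hs p hp).1.elim_directed_cover
        (fun d : D => {y | t' * p.2 < d.1 y})
        (fun d => (hl d.1 d.2).isOpen_preimage _) ?_ ?_
      · intro x hx
        have h1 : t' < (⨆ h ∈ D, h x) / (p.2 : ℝ≥0∞) :=
          ht'.trans_le (iInf₂_le_of_le p hp (iInf₂_le x hx))
        rw [ENNReal.lt_div_iff_mul_lt (by simp [ht'.ne_top]) (by simp)] at h1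
        simp only [lt_iSup_iff] at h1
        obtain ⟨d, hd, h⟩ := h1
        exact Set.mem_iUnion.2 ⟨⟨d, hd⟩, h⟩
      · intro a b
        obtain ⟨c, hc, h1, h2⟩ := hD a.1 a.2 b.1 b.2
        exact ⟨⟨c, hc⟩, fun y hy => lt_of_lt_of_le hy (h1 y), fun y hy => lt_of_lt_of_le hy (h2 y)⟩
    have key2 : ∀ u : Finset (Set X × ℝ≥0), u ⊆ s →
        ∃ d ∈ D, ∀ p ∈ u, ∀ x ∈ p.1, t' * p.2 < d x := by
      classical
      intro u
      induction u using Finset.induction_on with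
      | empty => intro _; exact ⟨hne.some, hne.some_mem, by simp⟩
      | insert p u _ ih =>
        intro hu
        obtain ⟨d, hd, h1⟩ := ih ((Finset.subset_insert _ _).trans hu)
        obtain ⟨e, he, h2⟩ := key p (hu (Finset.mem_insert_self _ _))
        obtain ⟨c, hc, h3, h4⟩ := hD d hd e he
        refine ⟨c, hc, fun q hq x hx => ?_⟩
        rcases Finset.mem_insert.1 hq with rfl | hq
        · exact (h2 x hx).trans_le (h4 x)
        · exact (h1 q hq x hx).trans_le (h3 x)
    obtain ⟨d, hd, h⟩ := key2 s subset_rfl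
    refine le_iSup₂_of_le d hd ?_
    refine le_iInf₂ fun p hp => le_iInf₂ fun x hx => ?_
    rw [ENNReal.le_div_iff_mul_le (by simp [(hs p hp).2.ne']) (by simp)]
    exact (h p hp x hx).le
  · exact iSup₂_le fun d hd => GG_mono s fun x => le_iSup₂ (f := fun h (_ : h ∈ D) => h x) d hd

theorem HH_lsc {X : Type*} [TopologicalSpace X] (s : Finset (Set X × ℝ≥0)) :
    LowerSemicontinuous (HH s) :=
  lowerSemicontinuous_biSup fun _ _ => isOpen_interior.lowerSemicontinuous_indicator bot_le

theorem HH_mono {X : Type*} [TopologicalSpace X] {s t : Finset (Set X × ℝ≥0)} (h : s ⊆ t) :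
    HH s ≤ HH t := fun _ => biSup_mono fun _ hp => h hp

theorem HH_approx {X : Type*} [TopologicalSpace X] [LocallyCompactSpace X]
    (P : (X → ℝ≥0∞) → ℝ≥0∞) (hP : IsPrevision P) (h : X → ℝ≥0∞)
    (hh : LowerSemicontinuous h) (r : ℝ≥0∞) (hr : r < P h) :
    ∃ s : Finset (Set X × ℝ≥0),
      (∀ p ∈ s, (IsCompact p.1 ∧ 0 < p.2) ∧ ∀ x ∈ p.1, (p.2 : ℝ≥0∞) ≤ h x) ∧ r < P (HH s) := by
  classical
  set D : Set (X → ℝ≥0∞) := HH '' {s : Finset (Set X × ℝ≥0) |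
    ∀ p ∈ s, (IsCompact p.1 ∧ 0 < p.2) ∧ ∀ x ∈ p.1, (p.2 : ℝ≥0∞) ≤ h x} with hDdef
  have hsup : h = fun x => ⨆ d ∈ D, d x := by
    funext x
    apply le_antisymm
    · refine le_of_forall_lt fun t ht => ?_
      obtain ⟨c, htc, hc⟩ := ENNReal.lt_iff_exists_nnreal_btwn.1 ht
      have hnhds : {y | (c : ℝ≥0∞) < h y} ∈ nhds x := hh x c hc
      obtain ⟨K, hK, hKs, hKc⟩ := LocallyCompactSpace.local_compact_nhds x _ hnhds
      refine htc.trans_le ?_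
      refine le_iSup₂_of_le (HH {(K, c)}) ⟨{(K, c)}, ?_, rfl⟩ ?_
      · intro p hp
        rw [Finset.mem_singleton] at hp
        subst hp
        exact ⟨⟨hKc, ENNReal.coe_pos.1 (bot_le.trans_lt htc)⟩, fun y hy => (hKs hy).le⟩
      · simp [HH, mem_interior_iff_mem_nhds.2 hK]
    · refine iSup₂_le ?_
      rintro _ ⟨s, hs, rfl⟩
      refine iSup₂_le fun p hp => ?_
      by_cases hx : x ∈ interior p.1
      · simpa [hx] using (hs p hp).2 x (interior_subset hx)
      · simp [hx]
  have h2 := hP.2.1 D ⟨_, ∅, by simp, rfl⟩ (by rintro _ ⟨s, _, rfl⟩; exact HH_lsc s) (by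
    rintro _ ⟨s, hs, rfl⟩ _ ⟨t, ht, rfl⟩
    refine ⟨HH (s ∪ t), ⟨s ∪ t, ?_, rfl⟩, HH_mono Finset.subset_union_left,
      HH_mono Finset.subset_union_right⟩
    intro p hp
    rcases Finset.mem_union.1 hp with hp | hp
    · exact hs p hp
    · exact ht p hp)
  rw [← hsup] at h2
  rw [h2] at hr
  simp only [lt_iSup_iff] at hr
  obtain ⟨_, ⟨s, hs, rfl⟩, hr⟩ := hr
  exact ⟨s, hs, hr⟩

theorem lsc_const_mul {X : Type*} [TopologicalSpace X] (s : Finset (Set X × ℝ≥0)) (b : ℝ≥0) :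
    LowerSemicontinuous (fun x => (b : ℝ≥0∞) * HH s x) :=
  (ENNReal.continuous_const_mul ENNReal.coe_ne_top).comp_lowerSemicontinuous (HH_lsc s)
    (fun _ _ h => mul_le_mul_right h _)

/-- on a locally compact space, every prevision is the pointwise supremum
of the superlinear previsions below it. -/
theorem statement18 {X : Type*} [TopologicalSpace X] [LocallyCompactSpace X]
    (P : (X → ℝ≥0∞) → ℝ≥0∞) (hP : IsPrevision P) :
    ∀ h : X → ℝ≥0∞, LowerSemicontinuous h →
      P h = ⨆ F : {F : (X → ℝ≥0∞) → ℝ≥0∞ //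
          IsPrevision F ∧ PSuperlinear F ∧
            ∀ g : X → ℝ≥0∞, LowerSemicontinuous g → F g ≤ P g}, F.1 h := by
  intro h hh
  apply le_antisymm
  · refine le_of_forall_lt fun r' hr' => ?_
    obtain ⟨r, hr'r, hr⟩ := ENNReal.lt_iff_exists_nnreal_btwn.1 hr'
    refine hr'r.trans_le ?_
    obtain ⟨s, hs, hrs⟩ := HH_approx P hP h hh r hr
    have hne : ∃ p ∈ s, p.1.Nonempty := by
      by_contra! hcon
      have h0 : HH s = fun x => ((0 : ℝ≥0) : ℝ≥0∞) * HH s x := by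
        funext x
        simp only [HH, ENNReal.coe_zero, zero_mul]
        refine le_antisymm (iSup₂_le fun p hp => ?_) bot_le
        simp [hcon p hp]
      rw [h0, hP.2.2 0 _ (HH_lsc s)] at hrs
      simp at hrs
    refine le_iSup_of_le ⟨fun g => (r : ℝ≥0∞) * GG s g, ⟨?_, ?_, ?_⟩, ?_, ?_⟩ ?_
    · intro g g' _ _ hgg
      exact mul_le_mul_right (GG_mono s hgg) _
    · intro D hDne hl hD
      simp only [GG_scott s (fun p hp => (hs p hp).1) D hDne hl hD, ENNReal.mul_iSup]
    · intro a g _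
      simp only [GG_smul s hne, mul_left_comm]
    · intro g g' _ _
      simp only [← mul_add]
      exact mul_le_mul_right (GG_add s g g') _
    · intro g hg
      refine ENNReal.mul_le_of_forall_lt fun a ha b hb => ?_
      lift b to ℝ≥0 using hb.ne_top
      calc a * b ≤ P (HH s) * b := mul_le_mul_left (ha.trans hrs).le _
        _ = P (fun x => (b : ℝ≥0∞) * HH s x) := by rw [hP.2.2 b _ (HH_lsc s), mul_comm]
        _ ≤ P g := by
          refine hP.1 (lsc_const_mul s b) hg fun x => ?_
          simp only [HH, ENNReal.mul_iSup]
          refine iSup₂_le fun p hp => ?_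
          by_cases hx : x ∈ interior p.1
          · simp only [hx, Set.indicator_of_mem]
            rw [← ENNReal.le_div_iff_mul_le (by simp [(hs p hp).1.2.ne']) (by simp)]
            exact hb.le.trans (iInf₂_le_of_le p hp (iInf₂_le x (interior_subset hx)))
          · simp [hx]
    · have : (1 : ℝ≥0∞) ≤ GG s h := by
        refine le_iInf₂ fun p hp => le_iInf₂ fun x hx => ?_
        rw [ENNReal.le_div_iff_mul_le (by simp [(hs p hp).1.2.ne']) (by simp), one_mul]
        exact (hs p hp).2 x hx
      calc (r : ℝ≥0∞) = r * 1 := (mul_one _).symm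
        _ ≤ r * GG s h := mul_le_mul_right this _
  · exact iSup_le fun F => F.2.2.2 h hh
end
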